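/- arXiv:1809.10372 — 5 statements merged into one kernel-verified Lean document; each statement's English description precedes it below -/
import Mathlib

section
/- There exists an absolute constant C > 0 such that for every integer n ≥ 2, every real δ with 0 < δ ≤ 1, and every spanoid S on [n] = {1,...,n} that is a 2-LCS with error-tolerance δ, the rank of S satisfies rank(S) ≤ C · (1/δ) · log₂ n. -/
open scoped BigOperators

/-- A spanoid on ground set `X`: a set of inference rules `(A, i)`,
read as "`A` spans `i`". -/
abbrev SpanoidOn (X : Type) : Type := Set (Set X × X)

/-- The span of `T`: the smallest superset `T'` of `T` such that whenever `(A, i)` is a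
rule with `A ⊆ T'`, also `i ∈ T'`. -/
def sSpan {X : Type} (S : SpanoidOn X) (T : Set X) : Set X :=
  ⋂₀ {T' : Set X | T ⊆ T' ∧ ∀ p ∈ S, p.1 ⊆ T' → p.2 ∈ T'}

/-- The rank of a spanoid: the minimum size of a subset spanning the whole ground set. -/
noncomputable def sRank {X : Type} [Fintype X] (S : SpanoidOn X) : ℕ :=
  sInf {k : ℕ | ∃ T : Set X, T.ncard = k ∧ sSpan S T = Set.univ}

/-- A set is closed if it equals its own span. -/
def sClosed {X : Type} (S : SpanoidOn X) (B : Set X) : Prop := sSpan S B = B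

/-- A set is open if its complement is closed. -/
def sOpen {X : Type} (S : SpanoidOn X) (B : Set X) : Prop := sClosed S Bᶜ

/-- A code `C ⊆ K^X` is consistent with the spanoid `S` if for every rule `(A, i)` of `S`
there is a function `g` with `c i = g (c|_A)` for all codewords `c ∈ C`. -/
def sConsistent {X K : Type} (S : SpanoidOn X) (C : Set (X → K)) : Prop :=
  ∀ p ∈ S, ∃ g : (↥p.1 → K) → K, ∀ c ∈ C, c p.2 = g (fun a => c a.1)

/-- The functional rank of a spanoid: the supremum of `log |C| / log |Σ|` over all finite
alphabets `Σ` (of size at least 2) and all codes `C ⊆ Σ^X` consistent with `S`. -/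
noncomputable def sFrank {X : Type} (S : SpanoidOn X) : ℝ :=
  sSup {d : ℝ | ∃ m : ℕ, 2 ≤ m ∧ ∃ C : Set (X → Fin m),
    sConsistent S C ∧ d = Real.log (Nat.card C) / Real.log m}

/-- Feasibility for the entropy linear program of a spanoid. -/
def sEntFeasible {X : Type} (S : SpanoidOn X) (f : Set X → ℝ) : Prop :=
  f ∅ = 0 ∧ (∀ i : X, f {i} ≤ 1) ∧
  (∀ A B : Set X, f (A ∪ B) + f (A ∩ B) ≤ f A + f B) ∧
  (∀ A B : Set X, A ⊆ B → f A ≤ f B) ∧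
  (∀ A : Set X, ∀ i ∈ sSpan S A, f (A ∪ {i}) = f A)

/-- The optimum of the entropy linear program: maximize `f(X)` over feasible `f`. -/
noncomputable def sLPentropy {X : Type} (S : SpanoidOn X) : ℝ :=
  sSup {y : ℝ | ∃ f : Set X → ℝ, sEntFeasible S f ∧ y = f Set.univ}

/-- The optimum of the covering linear program: minimize `∑ i, x i` over `x ≥ 0` such that
`∑_{i ∈ B} x i ≥ 1` for every nonempty open set `B`. -/
noncomputable def sLPcover {X : Type} [Fintype X] (S : SpanoidOn X) : ℝ :=
  sInf {y : ℝ | ∃ x : X → ℝ, (∀ i, 0 ≤ x i) ∧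
    (∀ B : Set X, B.Nonempty → sOpen S B → 1 ≤ ∑ i, B.indicator x i) ∧
    y = ∑ i, x i}

/-- A spanoid on `[n]` is a `q`-LCS with error-tolerance `δ` if every `i` is spanned by at
least `δ n` pairwise disjoint `q`-element subsets. -/
def sIsLCS {n : ℕ} (q : ℕ) (δ : ℝ) (S : SpanoidOn (Fin n)) : Prop :=
  ∀ i : Fin n, ∃ M : Finset (Finset (Fin n)),
    δ * n ≤ (M.card : ℝ) ∧
    (∀ A ∈ M, A.card = q) ∧
    ((M : Set (Finset (Fin n))).Pairwise fun A B => Disjoint A B) ∧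
    ∀ A ∈ M, ((A : Set (Fin n)), i) ∈ S

section helpers
open Classical

variable {n : ℕ}

lemma span_sub {X : Type} (S : SpanoidOn X) (T : Set X) : T ⊆ sSpan S T :=
  Set.subset_sInter fun _ h => h.1

lemma span_rule {X : Type} {S : SpanoidOn X} {T : Set X} {A : Set X} {i : X}
    (h : (A, i) ∈ S) (hA : A ⊆ sSpan S T) : i ∈ sSpan S T := by
  intro U hU
  exact hU.2 _ h (fun a ha => hA ha U hU)

lemma span_le {X : Type} {S : SpanoidOn X} {T U : Set X} (h : T ⊆ sSpan S U) :
    sSpan S T ⊆ sSpan S U := by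
  intro x hx V hV
  exact hx V ⟨fun t ht => h ht V hV, hV.2⟩

lemma span_mono {X : Type} {S : SpanoidOn X} {T U : Set X} (h : T ⊆ U) :
    sSpan S T ⊆ sSpan S U := span_le (h.trans (span_sub S U))

/-- Every element is spanned by `T` together with at most one element of `R`. -/
def Cov (S : SpanoidOn (Fin n)) (T R : Finset (Fin n)) : Prop :=
  ∀ x, x ∈ sSpan S (T : Set (Fin n)) ∨ ∃ r ∈ R, x ∈ sSpan S (insert r (T : Set (Fin n)))

lemma hitting (δ : ℝ) (hδ : δ ≤ 1) (L : Finset (Fin n)) (V : Fin n → Finset (Fin n))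
    (hn : 0 < n) (hV : ∀ j ∈ L, δ * n ≤ ((V j).card : ℝ)) (t : ℕ) :
    ∃ T : Finset (Fin n), T.card ≤ t ∧
      ((L.filter fun j => Disjoint (V j) T).card : ℝ) ≤ (1 - δ) ^ t * L.card := by
  induction t with
  | zero => exact ⟨∅, by simp, by simp⟩
  | succ t ih =>
    obtain ⟨T, hT, hL⟩ := ih
    set U := L.filter fun j => Disjoint (V j) T with hU
    have hdc : ∑ a : Fin n, ((U.filter fun j => a ∈ V j).card : ℝ) = ∑ j ∈ U, ((V j).card : ℝ) := by
      have := Finset.sum_card_bipartiteAbove_eq_sum_card_bipartiteBelow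
        (s := (Finset.univ : Finset (Fin n))) (t := U) (fun a j => a ∈ V j)
      simp only [Finset.bipartiteAbove, Finset.bipartiteBelow, Finset.filter_univ_mem] at this
      exact_mod_cast this
    have hge : (U.card : ℝ) * (δ * n) ≤ ∑ j ∈ U, ((V j).card : ℝ) := by
      rw [← nsmul_eq_mul]
      exact Finset.card_nsmul_le_sum _ _ _ fun j hj => hV j (Finset.mem_filter.1 hj).1
    have : ∃ a : Fin n, δ * U.card ≤ ((U.filter fun j => a ∈ V j).card : ℝ) := by
      by_contra! hcon
      have : ∑ a : Fin n, ((U.filter fun j => a ∈ V j).card : ℝ) < ∑ a : Fin n, δ * U.card :=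
        Finset.sum_lt_sum_of_nonempty ⟨⟨0, hn⟩, Finset.mem_univ _⟩ fun a _ => hcon a
      simp only [Finset.sum_const, Finset.card_univ, Fintype.card_fin, nsmul_eq_mul] at this
      nlinarith
    obtain ⟨a, ha⟩ := this
    refine ⟨insert a T, (Finset.card_insert_le _ _).trans (by omega), ?_⟩
    have h1 : (L.filter fun j => Disjoint (V j) (insert a T)) = U.filter fun j => a ∉ V j := by
      ext j
      simp only [hU, Finset.mem_filter, Finset.disjoint_insert_right]
      tauto
    have h2 := Finset.card_filter_add_card_filter_not (s := U) (fun j => a ∈ V j)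
    have h3 : ((U.filter fun j => a ∈ V j).card : ℝ) + ((U.filter fun j => a ∉ V j).card : ℝ)
        = U.card := by exact_mod_cast h2
    rw [h1, pow_succ]
    have : (1 - δ) * (U.card : ℝ) ≤ (1 - δ) * ((1 - δ) ^ t * L.card) :=
      mul_le_mul_of_nonneg_left hL (by linarith)
    linarith

lemma cov_minimal (S : SpanoidOn (Fin n)) (T R : Finset (Fin n)) (h : Cov S T R) :
    ∃ R' ⊆ R, Cov S T R' ∧ ∀ j ∈ R', ¬ Cov S T (R'.erase j) := by
  obtain ⟨R', hR', hmin⟩ := Finset.exists_min_image (R.powerset.filter fun Q => Cov S T Q)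
    Finset.card ⟨R, by simp [h]⟩
  simp only [Finset.mem_filter, Finset.mem_powerset] at hR' hmin
  refine ⟨R', hR'.1, hR'.2, fun j hj hc => ?_⟩
  have := hmin (R'.erase j) ⟨(Finset.erase_subset _ _).trans hR'.1, hc⟩
  have := Finset.card_erase_lt_of_mem hj
  omega

set_option maxHeartbeats 2000000 in
lemma step (hn : 0 < n) (δ : ℝ) (h0 : 0 < δ) (h1 : δ ≤ 1) (S : SpanoidOn (Fin n))
    (hS : sIsLCS 2 δ S) (T R : Finset (Fin n)) (hc : Cov S T R) :
    ∃ T' R' : Finset (Fin n), Cov S T' R' ∧ (T'.card : ℝ) ≤ T.card + 4 / δ ∧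
      (R'.card : ℝ) ≤ 3 / 4 * R.card := by
  have hn' : (0 : ℝ) < n := by exact_mod_cast hn
  choose M hMc hM2 hMd hMS using hS
  have hr : ∀ x, ∃ r, x ∈ sSpan S (T : Set (Fin n)) ∨
      (r ∈ R ∧ x ∈ sSpan S (insert r (T : Set (Fin n)))) := by
    intro x
    rcases hc x with h | ⟨r, h⟩
    · exact ⟨x, Or.inl h⟩
    · exact ⟨r, Or.inr h⟩
  choose r hr using hr
  let comp : Fin n → Finset (Fin n) := fun j => Finset.univ.filter fun x => r x = j
  let Hv : Finset (Fin n) := Finset.univ.filter fun j => δ * n / 2 ≤ ((comp j).card : ℝ)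
  have hHv : (Hv.card : ℝ) ≤ 2 / δ := by
    have hsum : ∑ j : Fin n, ((comp j).card : ℝ) = n := by
      have := Finset.card_eq_sum_card_fiberwise (s := (Finset.univ : Finset (Fin n)))
        (t := Finset.univ) (f := r) (fun _ _ => Finset.mem_coe.2 (Finset.mem_univ _))
      rw [Finset.card_univ, Fintype.card_fin] at this
      exact_mod_cast this.symm
    have h2 : (Hv.card : ℝ) * (δ * n / 2) ≤ ∑ j ∈ Hv, ((comp j).card : ℝ) := by
      rw [← nsmul_eq_mul]
      exact Finset.card_nsmul_le_sum _ _ _ fun j hj => (Finset.mem_filter.1 hj).2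
    have h3 : ∑ j ∈ Hv, ((comp j).card : ℝ) ≤ ∑ j : Fin n, ((comp j).card : ℝ) :=
      Finset.sum_le_sum_of_subset_of_nonneg (Finset.subset_univ _) fun _ _ _ => by positivity
    rw [le_div_iff₀ h0]
    have : (n : ℝ) * (Hv.card * δ) ≤ n * 2 := by nlinarith
    exact le_of_mul_le_mul_left this hn'
  let good : Fin n → Finset (Finset (Fin n)) := fun j => (M j).filter fun A => Disjoint A (comp j)
  let V : Fin n → Finset (Fin n) := fun j => (good j).biUnion id
  let L := R \ Hv
  have hV : ∀ j ∈ L, δ * n ≤ ((V j).card : ℝ) := by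
    intro j hj
    have hlight : ((comp j).card : ℝ) < δ * n / 2 := by
      by_contra! hcon
      exact (Finset.mem_sdiff.1 hj).2 (Finset.mem_filter.2 ⟨Finset.mem_univ _, hcon⟩)
    have hVc : (V j).card = (good j).card * 2 := by
      rw [Finset.card_biUnion, Finset.sum_const_nat (m := 2)]
      · intro A hA
        exact hM2 j A (Finset.mem_filter.1 hA).1
      · intro A hA B hB hAB
        exact hMd j (Finset.mem_filter.1 hA).1 (Finset.mem_filter.1 hB).1 hAB
    have hbad : ((M j).filter fun A => ¬ Disjoint A (comp j)).card ≤ (comp j).card := by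
      calc _ = ∑ A ∈ (M j).filter (fun A => ¬ Disjoint A (comp j)), 1 := by simp
        _ ≤ ∑ A ∈ (M j).filter (fun A => ¬ Disjoint A (comp j)), (A ∩ comp j).card := by
          refine Finset.sum_le_sum fun A hA => ?_
          have := (Finset.mem_filter.1 hA).2
          rw [Finset.not_disjoint_iff_nonempty_inter] at this
          exact this.card_pos
        _ = (((M j).filter (fun A => ¬ Disjoint A (comp j))).biUnion fun A => A ∩ comp j).card := by
          rw [Finset.card_biUnion]
          intro A hA B hB hAB
          have := hMd j (Finset.mem_filter.1 hA).1 (Finset.mem_filter.1 hB).1 hAB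
          exact this.mono Finset.inter_subset_left Finset.inter_subset_left
        _ ≤ _ := by
          refine Finset.card_le_card (Finset.biUnion_subset.2 fun A _ => Finset.inter_subset_right)
    have hsum := Finset.card_filter_add_card_filter_not (s := M j) (fun A => Disjoint A (comp j))
    have h5 : ((M j).card : ℝ) ≤ (good j).card + (comp j).card := by
      have : (M j).card ≤ (good j).card + (comp j).card := by
        change (good j).card + _ = _ at hsum
        omega
      exact_mod_cast this
    have := hMc j
    rw [hVc]; push_cast; linarith
  obtain ⟨T1, hT1, hun⟩ := hitting δ h1 L V hn hV ⌈1 / δ⌉₊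
  have hT1c : (T1.card : ℝ) ≤ 2 / δ := by
    have ha : ((T1.card : ℕ) : ℝ) ≤ (⌈1 / δ⌉₊ : ℝ) := by exact_mod_cast hT1
    have hb := Nat.ceil_lt_add_one (a := 1 / δ) (by positivity)
    have hd : 1 ≤ 1 / δ := by rw [le_div_iff₀ h0]; linarith
    have : 2 / δ = 1 / δ + 1 / δ := by ring
    linarith
  have hpow : (1 - δ) ^ ⌈1 / δ⌉₊ ≤ 1 / 2 := by
    calc (1 - δ) ^ ⌈1 / δ⌉₊ ≤ (Real.exp (-δ)) ^ ⌈1 / δ⌉₊ := by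
          apply pow_le_pow_left₀ (by linarith)
          have := Real.add_one_le_exp (-δ); linarith
      _ = Real.exp (-(⌈1 / δ⌉₊ * δ)) := by rw [← Real.exp_nat_mul]; congr 1; ring
      _ ≤ Real.exp (-1) := by
          apply Real.exp_le_exp.2
          have := Nat.le_ceil (1 / δ)
          rw [div_le_iff₀ h0] at this
          linarith
      _ ≤ 1 / 2 := by
          rw [Real.exp_neg, one_div]
          apply inv_anti₀ (by norm_num)
          have := Real.add_one_le_exp (1 : ℝ); linarith
  let T' := T ∪ Hv ∪ T1
  have hTT' : (T : Set (Fin n)) ⊆ T' := by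
    intro x hx; simp only [T', Finset.coe_union]; exact Or.inl (Or.inl hx)
  have hcov : Cov S T' R := by
    intro x
    rcases hc x with h | ⟨q, hq, h⟩
    · exact Or.inl (span_mono hTT' h)
    · exact Or.inr ⟨q, hq, span_mono (Set.insert_subset_insert hTT') h⟩
  obtain ⟨Q, hQR, hQ, hmin⟩ := cov_minimal S T' R hcov
  have hA : ∀ j ∈ Q, j ∉ sSpan S (T' : Set (Fin n)) := by
    intro j hj hjs
    apply hmin j hj
    intro x
    rcases hQ x with h | ⟨q, hq, h⟩
    · exact Or.inl h
    · by_cases hqj : q = j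
      · subst hqj
        exact Or.inl (span_le (Set.insert_subset hjs (span_sub _ _)) h)
      · exact Or.inr ⟨q, Finset.mem_erase.2 ⟨hqj, hq⟩, h⟩
  have hB : ∀ j ∈ Q, ∀ s ∈ Q, j ∈ sSpan S (insert s (T' : Set (Fin n))) → s = j := by
    intro j hj s hs hjs
    by_contra hne
    apply hmin j hj
    intro x
    rcases hQ x with h | ⟨q, hq, h⟩
    · exact Or.inl h
    · by_cases hqj : q = j
      · subst hqj
        exact Or.inr ⟨s, Finset.mem_erase.2 ⟨hne, hs⟩, span_le (Set.insert_subset hjs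
          ((Set.subset_insert _ _).trans (span_sub _ _))) h⟩
      · exact Or.inr ⟨q, Finset.mem_erase.2 ⟨hqj, hq⟩, h⟩
  have hQL : Q ⊆ L := by
    intro j hj
    refine Finset.mem_sdiff.2 ⟨hQR hj, fun hH => hA j hj (span_sub _ _ ?_)⟩
    simp [T', hH]
  let N := Q.filter fun j => Disjoint (V j) T1
  let H := Q.filter fun j => ¬ Disjoint (V j) T1
  have hp : ∀ j ∈ H, ∃ p, p ∈ R ∧ p ≠ j ∧ j ∈ sSpan S (insert p (T' : Set (Fin n))) := by
    intro j hj
    obtain ⟨hjQ, hjd⟩ := Finset.mem_filter.1 hj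
    obtain ⟨a, haV, haT⟩ := Finset.not_disjoint_iff.1 hjd
    obtain ⟨A, hAg, haA⟩ := Finset.mem_biUnion.1 haV
    obtain ⟨hAM, hAd⟩ := Finset.mem_filter.1 hAg
    have hrule := hMS j A hAM
    have haT' : a ∈ (T' : Set (Fin n)) := by simp [T', haT]
    obtain ⟨x, y, hxy, hAxy⟩ := Finset.card_eq_two.1 (hM2 j A hAM)
    have hb : ∃ b ∈ A, ∀ c ∈ A, c = a ∨ c = b := by
      simp only [id] at haA
      subst hAxy
      simp only [Finset.mem_insert, Finset.mem_singleton] at haA ⊢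
      rcases haA with rfl | rfl
      · exact ⟨y, Or.inr rfl, fun c h => h⟩
      · exact ⟨x, Or.inl rfl, fun c h => h.symm⟩
    obtain ⟨b, hbA, hb⟩ := hb
    have hrb : r b ≠ j := by
      intro h
      exact Finset.disjoint_left.1 hAd hbA (Finset.mem_filter.2 ⟨Finset.mem_univ _, h⟩)
    have key : ∀ U : Set (Fin n), (T' : Set (Fin n)) ⊆ U → b ∈ sSpan S U → j ∈ sSpan S U := by
      intro U hU hbU
      refine span_rule hrule fun c hcA => ?_
      rcases hb c hcA with rfl | rfl
      · exact span_sub _ _ (hU haT')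
      · exact hbU
    rcases hr b with h | ⟨h, h'⟩
    · exact absurd (key _ subset_rfl (span_mono hTT' h)) (hA j hjQ)
    · exact ⟨r b, h, hrb, key _ (Set.subset_insert _ _)
        (span_mono (Set.insert_subset_insert hTT') h')⟩
  choose! p hpR hpne hpj using hp
  have hC : ∀ j ∈ H, ∀ s ∈ Q, p j ∈ sSpan S (insert s (T' : Set (Fin n))) → s = j := by
    intro j hj s hs h
    exact hB j (Finset.mem_filter.1 hj).1 s hs
      (span_le (Set.insert_subset h ((Set.subset_insert _ _).trans (span_sub _ _))) (hpj j hj))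
  have hHc : H.card ≤ (R \ Q).card := by
    apply Finset.card_le_card_of_injOn p
    · intro j hj
      refine Finset.mem_coe.2 (Finset.mem_sdiff.2 ⟨hpR j hj, fun hq => ?_⟩)
      exact hpne j hj (hC j hj _ hq (span_sub _ _ (Set.mem_insert _ _)))
    · intro j hj k hk hjk
      rcases hQ (p j) with h | ⟨s, hs, h⟩
      · exact absurd (span_le (Set.insert_subset h (span_sub _ _)) (hpj j hj))
          (hA j (Finset.mem_filter.1 hj).1)
      · rw [← hC j hj s hs h]
        exact hC k hk s hs (hjk ▸ h)
  refine ⟨T', Q, hQ, ?_, ?_⟩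
  · have : T'.card ≤ T.card + Hv.card + T1.card :=
      (Finset.card_union_le _ _).trans (Nat.add_le_add_right (Finset.card_union_le _ _) _)
    have : (T'.card : ℝ) ≤ T.card + Hv.card + T1.card := by exact_mod_cast this
    have e : 4 / δ = 2 / δ + 2 / δ := by ring
    linarith
  · have e1 : N.card + H.card = Q.card := Finset.card_filter_add_card_filter_not _
    have e2 := Finset.card_sdiff_add_card_eq_card hQR
    have e3 : N.card ≤ (L.filter fun j => Disjoint (V j) T1).card :=
      Finset.card_le_card (Finset.filter_subset_filter _ hQL)
    have e4 : L.card ≤ R.card := Finset.card_le_card Finset.sdiff_subset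
    have e5 : (N.card : ℝ) ≤ 1 / 2 * R.card := by
      calc (N.card : ℝ) ≤ _ := by exact_mod_cast e3
        _ ≤ _ := hun
        _ ≤ 1 / 2 * L.card := mul_le_mul_of_nonneg_right hpow (by positivity)
        _ ≤ 1 / 2 * R.card := by
          have : (L.card : ℝ) ≤ R.card := by exact_mod_cast e4
          linarith
    have e6 : (2 : ℝ) * Q.card ≤ N.card + R.card := by
      have : 2 * Q.card ≤ N.card + R.card := by omega
      exact_mod_cast this
    linarith

lemma iter (hn : 0 < n) (δ : ℝ) (h0 : 0 < δ) (h1 : δ ≤ 1) (S : SpanoidOn (Fin n))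
    (hS : sIsLCS 2 δ S) (k : ℕ) :
    ∃ T R : Finset (Fin n), Cov S T R ∧ (T.card : ℝ) ≤ k * (4 / δ) ∧
      (R.card : ℝ) ≤ (3 / 4) ^ k * n := by
  induction k with
  | zero =>
    refine ⟨∅, Finset.univ, fun x => Or.inr ⟨x, Finset.mem_univ _, span_sub _ _ (by simp)⟩, ?_, ?_⟩
    <;> simp
  | succ k ih =>
    obtain ⟨T, R, hc, hT, hR⟩ := ih
    obtain ⟨T', R', hc', hT', hR'⟩ := step hn δ h0 h1 S hS T R hc
    refine ⟨T', R', hc', ?_, ?_⟩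
    · push_cast; linarith
    · rw [pow_succ]; linarith

end helpers

/-- Every 2-LCS with error-tolerance `δ` on `[n]` has rank at most
`C · (1/δ) · log₂ n` for an absolute constant `C > 0`. -/
theorem two_LCS_rank_upper_bound :
    ∃ C : ℝ, 0 < C ∧ ∀ n : ℕ, 2 ≤ n → ∀ δ : ℝ, 0 < δ → δ ≤ 1 →
      ∀ S : SpanoidOn (Fin n), sIsLCS 2 δ S →
        (sRank S : ℝ) ≤ C * (1 / δ) * Real.logb 2 n := by
  refine ⟨24, by norm_num, fun n hn δ h0 h1 S hS => ?_⟩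
  obtain ⟨T, R, hc, hT, hR⟩ := iter (by omega) δ h0 h1 S hS (3 * (Nat.log 2 n + 1))
  have hlt : (n : ℝ) < 2 ^ (Nat.log 2 n + 1) := by
    exact_mod_cast Nat.lt_pow_succ_log_self (by norm_num) n
  have hR1 : (R.card : ℝ) < 1 := by
    refine hR.trans_lt ?_
    rw [pow_mul]
    calc ((3 / 4 : ℝ) ^ 3) ^ (Nat.log 2 n + 1) * n ≤ (1 / 2) ^ (Nat.log 2 n + 1) * n := by
          gcongr; norm_num
      _ < (1 / 2) ^ (Nat.log 2 n + 1) * 2 ^ (Nat.log 2 n + 1) := by gcongr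
      _ = 1 := by rw [← mul_pow]; norm_num
  have hRe : R = ∅ := by
    rw [← Finset.card_eq_zero]
    have : R.card < 1 := by exact_mod_cast hR1
    omega
  have hspan : sSpan S (T : Set (Fin n)) = Set.univ := by
    refine Set.eq_univ_of_forall fun x => ?_
    rcases hc x with h | ⟨q, hq, _⟩
    · exact h
    · simp [hRe] at hq
  have hrank : sRank S ≤ T.card :=
    Nat.sInf_le ⟨(T : Set (Fin n)), Set.ncard_coe_finset T, hspan⟩
  have hrank' : (sRank S : ℝ) ≤ T.card := by exact_mod_cast hrank
  have hl1 : (1 : ℝ) ≤ Real.logb 2 n := by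
    rw [Real.le_logb_iff_rpow_le (by norm_num) (by positivity)]
    simpa using (by exact_mod_cast hn : (2 : ℝ) ≤ n)
  have hl2 : (Nat.log 2 n : ℝ) ≤ Real.logb 2 n := by
    simpa using Real.natLog_le_logb n 2
  push_cast at hT
  have hk : (3 : ℝ) * ((Nat.log 2 n : ℝ) + 1) ≤ 6 * Real.logb 2 n := by linarith
  calc (sRank S : ℝ) ≤ 3 * ((Nat.log 2 n : ℝ) + 1) * (4 / δ) := hrank'.trans hT
    _ ≤ 6 * Real.logb 2 n * (4 / δ) := by gcongr
    _ = _ := by ring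
end

section
/- For every integer q ≥ 3 there exist a constant c > 0 and an integer n₀ such that for all n ≥ n₀ there exists a spanoid S on [n] with the following properties: for every i ∈ [n] there is a family M_i of ⌊n/(2q)⌋ pairwise disjoint q-element subsets of [n] such that (A,i) is a rule of S for every A ∈ M_i (so S is a q-LCS with error-tolerance 1/(4q)), and rank(S) > c · n^{(q-2)/(q-1)} / log₂ n. -/
open scoped BigOperators

lemma derive_aux {n : ℕ} (S : SpanoidOn (Fin n)) (T : Finset (Fin n))
    (hT : sSpan S (T : Set (Fin n)) = Set.univ) (k : ℕ) (hk : T.card + k ≤ n) :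
    ∃ U : Finset (Fin n), T ⊆ U ∧ U.card = T.card + k ∧
      ∀ i ∈ U, i ∉ T → ∃ A : Set (Fin n), (A, i) ∈ S ∧ A ⊆ (U : Set (Fin n)) := by
  induction k with
  | zero => exact ⟨T, subset_rfl, rfl, fun i hi hn => absurd hi hn⟩
  | succ k ih =>
    obtain ⟨U, hTU, hUc, hU⟩ := ih (by omega)
    have hex : ∃ p ∈ S, p.1 ⊆ (U : Set (Fin n)) ∧ p.2 ∉ U := by
      by_contra! hcon
      have h1 : sSpan S (T : Set (Fin n)) ⊆ (U : Set (Fin n)) :=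
        Set.sInter_subset_of_mem ⟨by exact_mod_cast hTU, fun p hp hpU => by
          simpa using hcon p hp hpU⟩
      rw [hT] at h1
      have h2 : U = Finset.univ := by
        ext x
        simpa using h1 (Set.mem_univ x)
      rw [h2, Finset.card_univ, Fintype.card_fin] at hUc
      omega
    obtain ⟨⟨A, i⟩, hp, hA, hi⟩ := hex
    simp only at hA hi
    refine ⟨insert i U, hTU.trans (Finset.subset_insert _ _), ?_, ?_⟩
    · rw [Finset.card_insert_of_notMem hi]; omega
    · intro x hx hxT
      have hsub : (U : Set (Fin n)) ⊆ ((insert i U : Finset (Fin n)) : Set (Fin n)) := by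
        exact_mod_cast Finset.subset_insert _ _
      rcases Finset.mem_insert.1 hx with rfl | hx
      · exact ⟨A, hp, hA.trans hsub⟩
      · obtain ⟨B, hB, hBU⟩ := hU x hx hxT
        exact ⟨B, hB, hBU.trans hsub⟩

lemma lt_rank_of {n : ℕ} (S : SpanoidOn (Fin n)) (r t : ℕ) (hrt : r ≤ t) (htn : t ≤ n)
    (h : ∀ U : Finset (Fin n), U.card = t → ∀ W ⊆ U, W.card = t - r →
      ¬ ∀ i ∈ W, ∃ A : Set (Fin n), (A, i) ∈ S ∧ A ⊆ (U : Set (Fin n))) :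
    r < sRank S := by
  by_contra! hcon
  have hne : {k : ℕ | ∃ T : Set (Fin n), T.ncard = k ∧ sSpan S T = Set.univ}.Nonempty := by
    refine ⟨_, Set.univ, rfl, ?_⟩
    apply Set.eq_univ_of_univ_subset
    exact Set.subset_sInter fun T' hT' => hT'.1
  obtain ⟨T, hTc, hT⟩ := Nat.sInf_mem hne
  change T.ncard = sRank S at hTc
  classical
  obtain ⟨T, rfl⟩ : ∃ T' : Finset (Fin n), (T' : Set (Fin n)) = T :=
    ⟨T.toFinset, by simp⟩
  rw [Set.ncard_coe_finset] at hTc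
  obtain ⟨U, hTU, hUc, hU⟩ := derive_aux S T hT (t - T.card) (by omega)
  have hsd : t - r ≤ (U \ T).card := by
    rw [Finset.card_sdiff_of_subset hTU]; omega
  obtain ⟨W, hWs, hWc⟩ := Finset.exists_subset_card_eq hsd
  refine h U (by omega) W (hWs.trans Finset.sdiff_subset) hWc ?_
  intro i hi
  have := Finset.mem_sdiff.1 (hWs hi)
  exact hU i this.1 this.2

/-- The `j`-th block of the matching with shift vector `v`. -/
def blk {q m n : ℕ} (e : Fin q × ZMod m ↪ Fin n) (v : Fin q → ZMod m) (j : ZMod m) :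
    Finset (Fin n) :=
  Finset.univ.map ⟨fun l : Fin q => e (l, j + v l), fun a b h => by
    have := e.injective h
    exact (Prod.mk.inj this).1⟩

lemma mem_blk {q m n : ℕ} (e : Fin q × ZMod m ↪ Fin n) (v : Fin q → ZMod m) (j : ZMod m)
    (x : Fin n) : x ∈ blk e v j ↔ ∃ l, e (l, j + v l) = x := by
  simp only [blk, Finset.mem_map, Finset.mem_univ, true_and]
  rfl

open Classical in
/-- shift vectors with a block inside `U`. -/
noncomputable def badS {q m n : ℕ} [NeZero m] (e : Fin q × ZMod m ↪ Fin n)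
    (U : Finset (Fin n)) : Finset (Fin q → ZMod m) :=
  Finset.univ.filter fun v => ∃ j, blk e v j ⊆ U

lemma card_badS {q m n : ℕ} [NeZero m] (e : Fin q × ZMod m ↪ Fin n)
    (U : Finset (Fin n)) : (badS e U).card ≤ m * U.card ^ q := by
  classical
  have hsub : badS e U ⊆ Finset.univ.biUnion fun j : ZMod m =>
      Fintype.piFinset fun l : Fin q => Finset.univ.filter fun x : ZMod m => e (l, j + x) ∈ U := by
    intro v hv
    simp only [badS, Finset.mem_filter, Finset.mem_univ, true_and] at hv
    obtain ⟨j, hj⟩ := hv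
    simp only [Finset.mem_biUnion, Finset.mem_univ, true_and, Fintype.mem_piFinset,
      Finset.mem_filter]
    exact ⟨j, fun l => hj ((mem_blk _ _ _ _).2 ⟨l, rfl⟩)⟩
  refine (Finset.card_le_card hsub).trans ?_
  refine (Finset.card_biUnion_le_card_mul _ _ (U.card ^ q) ?_).trans ?_
  · intro j _
    rw [Fintype.card_piFinset]
    refine (Finset.prod_le_pow_card _ _ U.card ?_).trans (by simp)
    intro l _
    refine Finset.card_le_card_of_injOn (fun x => e (l, j + x)) ?_ ?_
    · intro x hx
      simpa using hx
    · intro x _ y _ h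
      have := (Prod.mk.inj (e.injective h)).2
      exact add_left_cancel this
  · rw [Finset.card_univ, ZMod.card]

lemma exists_shift {q m n : ℕ} [NeZero m] (e : Fin q × ZMod m ↪ Fin n) (t w : ℕ)
    (hwt : w ≤ t) (htn : t ≤ n)
    (hcount : n.choose t * 2 ^ t * (m * t ^ q) ^ w < (m ^ q) ^ w) :
    ∃ s : Fin n → Fin q → ZMod m, ∀ U : Finset (Fin n), U.card = t → ∀ W ⊆ U, W.card = w →
      ¬ ∀ i ∈ W, s i ∈ badS e U := by
  classical
  by_contra! hcon
  have hsub : (Finset.univ : Finset (Fin n → Fin q → ZMod m)) ⊆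
      (Finset.powersetCard t Finset.univ).biUnion fun U =>
        (Finset.powersetCard w U).biUnion fun W =>
          Fintype.piFinset fun i => if i ∈ W then badS e U else Finset.univ := by
    intro s _
    obtain ⟨U, hU, W, hW, hWc, h⟩ := hcon s
    simp only [Finset.mem_biUnion, Finset.mem_powersetCard, Fintype.mem_piFinset]
    refine ⟨U, ⟨Finset.subset_univ _, hU⟩, W, ⟨hW, hWc⟩, fun i => ?_⟩
    split_ifs with hi
    · exact h i hi
    · exact Finset.mem_univ _
  have h1 := Finset.card_le_card hsub
  have h2 : _ ≤ (Finset.powersetCard t (Finset.univ : Finset (Fin n))).card *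
      (2 ^ t * ((m * t ^ q) ^ w * (m ^ q) ^ (n - w))) := h1.trans <| by
    refine Finset.card_biUnion_le_card_mul _ _ _ ?_
    intro U hU
    have hUc := (Finset.mem_powersetCard.1 hU).2
    refine (Finset.card_biUnion_le_card_mul _ _ ((m * t ^ q) ^ w * (m ^ q) ^ (n - w)) ?_).trans ?_
    · intro W hW
      have hWc := (Finset.mem_powersetCard.1 hW).2
      rw [Fintype.card_piFinset]
      have : ∀ i : Fin n, (if i ∈ W then badS e U else Finset.univ).card ≤
          if i ∈ W then m * t ^ q else m ^ q := by
        intro i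
        split_ifs
        · rw [← hUc]; exact card_badS e U
        · simp [Finset.card_univ, ZMod.card]
      refine (Finset.prod_le_prod' fun i _ => this i).trans ?_
      rw [Finset.prod_ite, Finset.prod_const, Finset.prod_const]
      have c1 : (Finset.univ.filter fun i => i ∈ W) = W := by ext; simp
      have c2 : (Finset.univ.filter fun i => i ∉ W) = Wᶜ := by ext; simp
      rw [c1, c2, Finset.card_compl, hWc, Fintype.card_fin]
    · gcongr
      rw [Finset.card_powersetCard, hUc]
      exact Nat.choose_le_two_pow _ _
  rw [Finset.card_powersetCard, Finset.card_univ, Finset.card_univ, Fintype.card_fin,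
    Fintype.card_fun, Fintype.card_fun, Fintype.card_fin, Fintype.card_fin, ZMod.card] at h2
  have hm : 0 < m := Nat.pos_of_ne_zero (NeZero.ne m)
  have h3 : (m ^ q) ^ n = (m ^ q) ^ w * (m ^ q) ^ (n - w) := by
    rw [← pow_add]; congr 1; omega
  have h4 : n.choose t * 2 ^ t * (m * t ^ q) ^ w * (m ^ q) ^ (n - w) <
    (m ^ q) ^ w * (m ^ q) ^ (n - w) := by
    apply Nat.mul_lt_mul_of_pos_right hcount
    positivity
  rw [h3] at h2
  have : n.choose t * (2 ^ t * ((m * t ^ q) ^ w * (m ^ q) ^ (n - w))) =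
    n.choose t * 2 ^ t * (m * t ^ q) ^ w * (m ^ q) ^ (n - w) := by ring
  omega

lemma core (q m n t r : ℕ) (hq : 0 < q) (hm : 0 < m) (hqm : q * m ≤ n) (hrt : r ≤ t)
    (htn : t ≤ n)
    (hcount : n.choose t * 2 ^ t * (m * t ^ q) ^ (t - r) < (m ^ q) ^ (t - r)) :
    ∃ S : SpanoidOn (Fin n),
      (∀ i : Fin n, ∃ M : Finset (Finset (Fin n)),
          M.card = m ∧
          (∀ A ∈ M, A.card = q) ∧
          ((M : Set (Finset (Fin n))).Pairwise fun A B => Disjoint A B) ∧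
          ∀ A ∈ M, ((A : Set (Fin n)), i) ∈ S) ∧ r < sRank S := by
  have : NeZero m := ⟨hm.ne'⟩
  obtain ⟨e⟩ : Nonempty (Fin q × ZMod m ↪ Fin n) := by
    apply Function.Embedding.nonempty_of_card_le
    simpa [ZMod.card] using hqm
  obtain ⟨s, hs⟩ := exists_shift e t (t - r) (Nat.sub_le _ _) htn hcount
  have hdisj : ∀ (v : Fin q → ZMod m) (j k : ZMod m), j ≠ k →
      Disjoint (blk e v j) (blk e v k) := by
    intro v j k hjk
    rw [Finset.disjoint_left]
    intro x hx hy
    obtain ⟨l, rfl⟩ := (mem_blk _ _ _ _).1 hx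
    obtain ⟨l', h⟩ := (mem_blk _ _ _ _).1 hy
    obtain ⟨h1, h2⟩ := Prod.mk.inj (e.injective h)
    subst h1
    exact hjk (add_right_cancel h2).symm
  have hcard : ∀ (v : Fin q → ZMod m) (j : ZMod m), (blk e v j).card = q := by
    intro v j; simp [blk]
  refine ⟨{p | ∃ j, p.1 = (blk e (s p.2) j : Set (Fin n))}, ?_, ?_⟩
  · intro i
    refine ⟨Finset.univ.image (blk e (s i)), ?_, ?_, ?_, ?_⟩
    · rw [Finset.card_image_of_injective, Finset.card_univ, ZMod.card]
      intro j k h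
      by_contra hjk
      have := hdisj (s i) j k hjk
      rw [h, disjoint_self] at this
      have h' := hcard (s i) k
      rw [this] at h'
      simp at h'
      omega
    · intro A hA
      obtain ⟨j, -, rfl⟩ := Finset.mem_image.1 hA
      exact hcard _ _
    · intro A hA B hB hAB
      obtain ⟨j, -, rfl⟩ := Finset.mem_image.1 (Finset.mem_coe.1 hA)
      obtain ⟨k, -, rfl⟩ := Finset.mem_image.1 (Finset.mem_coe.1 hB)
      exact hdisj _ _ _ fun h => hAB (by rw [h])
    · intro A hA
      obtain ⟨j, -, rfl⟩ := Finset.mem_image.1 hA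
      exact ⟨j, rfl⟩
  · refine lt_rank_of _ r t hrt htn ?_
    intro U hU W hW hWc hall
    refine hs U hU W hW hWc fun i hi => ?_
    obtain ⟨A, ⟨j, hj⟩, hAU⟩ := hall i hi
    simp only at hj
    simp only [badS, Finset.mem_filter, Finset.mem_univ, true_and]
    refine ⟨j, ?_⟩
    rw [hj] at hAU
    exact_mod_cast hAU

lemma choose_mul_pow_le (n t : ℕ) : n.choose t * t ^ t ≤ (3 * n) ^ t := by
  have h1 : (n.choose t : ℝ) ≤ (n : ℝ) ^ t / (t.factorial : ℝ) := Nat.choose_le_pow_div t n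
  have h2 : (t : ℝ) ^ t / (t.factorial : ℝ) ≤ Real.exp t :=
    Real.pow_div_factorial_le_exp _ (Nat.cast_nonneg t) t
  have h3 : Real.exp t ≤ 3 ^ t := by
    rw [← mul_one (t : ℝ), Real.exp_nat_mul]
    gcongr
    have := Real.exp_one_lt_d9
    linarith
  have hf : (0 : ℝ) < t.factorial := by exact_mod_cast Nat.factorial_pos t
  have : (n.choose t : ℝ) * (t : ℝ) ^ t ≤ (3 * n) ^ t := by
    calc (n.choose t : ℝ) * (t : ℝ) ^ t ≤ (n : ℝ) ^ t / (t.factorial : ℝ) * (t : ℝ) ^ t := by gcongr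
      _ = (n : ℝ) ^ t * ((t : ℝ) ^ t / (t.factorial : ℝ)) := by ring
      _ ≤ (n : ℝ) ^ t * 3 ^ t := by gcongr; exact h2.trans h3
      _ = _ := by rw [mul_pow]; ring
  exact_mod_cast this

lemma count_ineq (k n t r m : ℕ) (hk : 1 ≤ k) (hmn : m ≤ n)
    (hm0 : 0 < m) (hm : n ≤ 4 * (k + 2) * m) (ht : 1 ≤ t) (hrt : r ≤ t) (hn : 2 ≤ n)
    (hr : n ^ r ≤ 2 ^ t) (htq : (256 * (k + 2) * t) ^ (k + 1) ≤ n ^ k) :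
    n.choose t * 2 ^ t * (m * t ^ (k + 2)) ^ (t - r) < (m ^ (k + 2)) ^ (t - r) := by
  have key : 6 * 2 ^ (k + 2) * n * t ^ (k + 1) < m ^ (k + 1) := by
    have h1 : n ^ (k + 1) ≤ (4 * (k + 2)) ^ (k + 1) * m ^ (k + 1) := by
      rw [← mul_pow]; gcongr
    have h2 : (4 * (k + 2)) ^ (k + 1) * (64 ^ (k + 1) * t ^ (k + 1)) * n ≤ n ^ (k + 1) := by
      rw [← mul_pow, ← mul_pow, pow_succ n]
      refine Nat.mul_le_mul_right n (le_trans (le_of_eq ?_) htq)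
      congr 1
      ring
    have h3 : 6 * 2 ^ (k + 2) < 64 ^ (k + 1) := by
      have : (64 : ℕ) ^ (k + 1) = 32 ^ (k + 1) * 2 ^ (k + 1) := by
        rw [← mul_pow]; norm_num
      rw [this, pow_succ 2 (k + 1)]
      have h32 : 32 ^ 1 ≤ 32 ^ (k + 1) := Nat.pow_le_pow_right (by norm_num) (by omega)
      have : 0 < 2 ^ (k + 1) := by positivity
      nlinarith
    have h4 : 6 * 2 ^ (k + 2) * (n * t ^ (k + 1)) < 64 ^ (k + 1) * (n * t ^ (k + 1)) :=
      Nat.mul_lt_mul_of_pos_right h3 (by positivity)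
    have h5 : (4 * (k + 2)) ^ (k + 1) * (64 ^ (k + 1) * (n * t ^ (k + 1))) ≤
        (4 * (k + 2)) ^ (k + 1) * m ^ (k + 1) := by
      refine le_trans (le_of_eq ?_) (h2.trans h1)
      ring
    have h6 := Nat.le_of_mul_le_mul_left h5 (by positivity)
    calc 6 * 2 ^ (k + 2) * n * t ^ (k + 1) = 6 * 2 ^ (k + 2) * (n * t ^ (k + 1)) := by ring
      _ < _ := h4.trans_le h6
  have key2 : n.choose t * 2 ^ t * (m * t ^ (k + 2)) ^ t * 2 ^ (t * (k + 2)) <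
      (m ^ (k + 2)) ^ t := by
    calc n.choose t * 2 ^ t * (m * t ^ (k + 2)) ^ t * 2 ^ (t * (k + 2))
        = (n.choose t * t ^ t) * (2 ^ t * (m * t ^ (k + 1)) ^ t * (2 ^ (k + 2)) ^ t) := by
          rw [← pow_mul 2 (k + 2) t, mul_comm (k + 2) t, pow_succ t (k + 1), ← mul_assoc m,
            mul_pow (m * t ^ (k + 1)) t t]
          ring
      _ ≤ (3 * n) ^ t * (2 ^ t * (m * t ^ (k + 1)) ^ t * (2 ^ (k + 2)) ^ t) := by
          gcongr; exact choose_mul_pow_le n t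
      _ = (6 * 2 ^ (k + 2) * n * t ^ (k + 1) * m) ^ t := by
          rw [← mul_pow, ← mul_pow, ← mul_pow]; congr 1; ring
      _ < (m ^ (k + 1) * m) ^ t := by
          apply Nat.pow_lt_pow_left _ (by omega)
          exact Nat.mul_lt_mul_of_pos_right key hm0
      _ = _ := by rw [← pow_succ]
  have h7 : (m ^ (k + 2)) ^ r ≤ 2 ^ (t * (k + 2)) := by
    calc (m ^ (k + 2)) ^ r ≤ (n ^ (k + 2)) ^ r := by gcongr
      _ = (n ^ r) ^ (k + 2) := by rw [← pow_mul, ← pow_mul, mul_comm]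
      _ ≤ (2 ^ t) ^ (k + 2) := by gcongr
      _ = _ := by rw [← pow_mul]
  have h8 : 1 ≤ (m * t ^ (k + 2)) ^ r := Nat.one_le_iff_ne_zero.2 (by positivity)
  obtain ⟨w, rfl⟩ := Nat.exists_eq_add_of_le hrt
  rw [Nat.add_sub_cancel_left]
  by_contra! hcon
  set a := n.choose (r + w) * 2 ^ (r + w)
  set p := m * (r + w) ^ (k + 2)
  set D := m ^ (k + 2)
  have : D ^ (r + w) ≤ a * p ^ (r + w) * 2 ^ ((r + w) * (k + 2)) := by
    calc D ^ (r + w) = D ^ w * D ^ r := by rw [pow_add, mul_comm]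
      _ ≤ (a * p ^ w) * 2 ^ ((r + w) * (k + 2)) := by gcongr
      _ ≤ (a * p ^ w) * 2 ^ ((r + w) * (k + 2)) * p ^ r := Nat.le_mul_of_pos_right _ h8
      _ = _ := by rw [pow_add p]; ring
  omega

/-- For every `q ≥ 3` there exist `c > 0` and `n₀` such that for all `n ≥ n₀`
there is a spanoid on `[n]` in which every element is spanned by `⌊n/(2q)⌋` pairwise disjoint
`q`-subsets (hence a `q`-LCS with error-tolerance `1/(4q)`) and whose rank exceeds
`c · n^{(q-2)/(q-1)} / log₂ n`. -/
theorem exists_q_LCS_high_rank :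
    ∀ q : ℕ, 3 ≤ q → ∃ c : ℝ, 0 < c ∧ ∃ n₀ : ℕ, ∀ n : ℕ, n₀ ≤ n →
      ∃ S : SpanoidOn (Fin n),
        (∀ i : Fin n, ∃ M : Finset (Finset (Fin n)),
          M.card = n / (2 * q) ∧
          (∀ A ∈ M, A.card = q) ∧
          ((M : Set (Finset (Fin n))).Pairwise fun A B => Disjoint A B) ∧
          ∀ A ∈ M, ((A : Set (Fin n)), i) ∈ S) ∧
        sIsLCS q (1 / (4 * (q : ℝ))) S ∧
        c * (n : ℝ) ^ (((q : ℝ) - 2) / ((q : ℝ) - 1)) / Real.logb 2 n < (sRank S : ℝ) := by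
  intro q hq
  obtain ⟨k, rfl⟩ : ∃ k, q = k + 2 := ⟨q - 2, by omega⟩
  have hk : 1 ≤ k := by omega
  set α : ℝ := (((k + 2 : ℕ) : ℝ) - 2) / (((k + 2 : ℕ) : ℝ) - 1) with hα
  have hα' : α = (k : ℝ) / (k + 1) := by
    rw [hα]; push_cast; congr 1 <;> ring
  have hkR : (1 : ℝ) ≤ k := by exact_mod_cast hk
  have hα0 : 0 < α := by rw [hα']; positivity
  have hα1 : α ≤ 1 := by rw [hα', div_le_one (by positivity)]; linarith
  set ε : ℝ := 1 / (256 * (k + 2)) with hε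
  have hε0 : 0 < ε := by positivity
  have hε1 : ε ≤ 1 := by rw [hε, div_le_one (by positivity)]; linarith
  refine ⟨ε / 2, by positivity, ?_⟩
  have htend : Filter.Tendsto (fun n : ℕ => (n : ℝ) ^ α) Filter.atTop Filter.atTop :=
    (tendsto_rpow_atTop hα0).comp tendsto_natCast_atTop_atTop
  obtain ⟨n₁, hn₁⟩ := Filter.eventually_atTop.1 (htend.eventually_ge_atTop (2 / ε))
  refine ⟨max n₁ (4 * (k + 2)), fun n hn => ?_⟩
  have hn1 := hn₁ n (le_trans (le_max_left _ _) hn)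
  have hn2 : 4 * (k + 2) ≤ n := le_trans (le_max_right _ _) hn
  have hnR : (2 : ℝ) ≤ n := by exact_mod_cast (by omega : 2 ≤ n)
  set y : ℝ := (n : ℝ) ^ α with hy
  have hy2 : 2 ≤ ε * y := by
    rw [div_le_iff₀ hε0] at hn1; linarith
  have hyn : y ≤ n := by
    calc y ≤ (n : ℝ) ^ (1 : ℝ) := Real.rpow_le_rpow_of_exponent_le (by linarith) hα1
      _ = n := Real.rpow_one _
  have hy0 : 0 < y := by positivity
  set L : ℝ := Real.logb 2 n with hL
  have hL1 : 1 ≤ L := by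
    rw [hL, Real.le_logb_iff_rpow_le (by norm_num) (by linarith)]; simpa using hnR
  set t : ℕ := ⌊ε * y⌋₊ with ht
  have htle : (t : ℝ) ≤ ε * y := Nat.floor_le (by positivity)
  have htge : ε * y < t + 1 := Nat.lt_floor_add_one _
  have ht1 : 1 ≤ t := Nat.le_floor (by push_cast; linarith)
  set r : ℕ := ⌊(t : ℝ) / L⌋₊ with hr
  have hrle : (r : ℝ) ≤ t / L := Nat.floor_le (by positivity)
  have hrge : (t : ℝ) / L < r + 1 := Nat.lt_floor_add_one _
  have hrt : r ≤ t := by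
    have : (t : ℝ) / L ≤ t := div_le_self (Nat.cast_nonneg t) hL1
    exact_mod_cast hrle.trans this
  have htn : t ≤ n := by
    have : (t : ℝ) ≤ n := by nlinarith
    exact_mod_cast this
  set m := n / (2 * (k + 2)) with hm
  have hm2 : 2 ≤ m := by
    rw [hm, Nat.le_div_iff_mul_le (by positivity)]; linarith
  have hmul : 2 * (k + 2) * m ≤ n := Nat.mul_div_le n (2 * (k + 2))
  have hlt : n < 2 * (k + 2) * (m + 1) := Nat.lt_mul_div_succ n (by positivity)
  have hm4 : n ≤ 4 * (k + 2) * m := by nlinarith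
  have hmn : m ≤ n := Nat.div_le_self _ _
  have hpow : n ^ r ≤ 2 ^ t := by
    have h1 : (r : ℝ) * L ≤ t := by rwa [le_div_iff₀ (by linarith)] at hrle
    have h2 : ((n : ℝ)) = (2 : ℝ) ^ L := (Real.rpow_logb (by norm_num) (by norm_num)
      (by linarith)).symm
    have h3 : ((n : ℝ)) ^ r ≤ 2 ^ t := by
      rw [← Real.rpow_natCast 2 t, h2, ← Real.rpow_natCast, ← Real.rpow_mul (by norm_num)]
      apply Real.rpow_le_rpow_of_exponent_le (by norm_num)
      linarith
    exact_mod_cast h3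
  have htq : (256 * (k + 2) * t) ^ (k + 1) ≤ n ^ k := by
    have h1 : (256 * ((k : ℝ) + 2) * t) ≤ y := by
      rw [hε, one_div, inv_mul_eq_div, le_div_iff₀ (by positivity)] at htle
      linarith
    have h2 : y ^ (k + 1) = (n : ℝ) ^ k := by
      rw [hy, ← Real.rpow_natCast, ← Real.rpow_mul (by positivity), hα', ← Real.rpow_natCast]
      congr 1
      push_cast
      field_simp
    have h3 : (256 * ((k : ℝ) + 2) * t) ^ (k + 1) ≤ (n : ℝ) ^ k := by
      rw [← h2]; gcongr
    exact_mod_cast h3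
  obtain ⟨S, hS, hrank⟩ := core (k + 2) m n t r (by omega) (by omega) (by nlinarith) hrt htn
    (count_ineq k n t r m hk hmn (by omega) hm4 ht1 hrt (by omega) hpow htq)
  refine ⟨S, hS, ?_, ?_⟩
  · intro i
    obtain ⟨M, hMc, h1, h2, h3⟩ := hS i
    refine ⟨M, ?_, h1, h2, h3⟩
    rw [hMc, div_mul_eq_mul_div, one_mul, div_le_iff₀ (by positivity)]
    have : (n : ℝ) ≤ 4 * ((k : ℝ) + 2) * m := by exact_mod_cast hm4
    push_cast
    linarith
  · have h1 : ((r : ℝ) + 1) ≤ sRank S := by exact_mod_cast hrank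
    have h2 : ε / 2 * y / L ≤ t / L := by
      apply div_le_div_of_nonneg_right _ (by linarith)
      linarith
    linarith
end

section
/- There exist constants c > 0 and n₀ such that for every real δ with 0 < δ ≤ 1/4 and every integer n ≥ n₀/δ, there exists a spanoid S on [n] that is a 2-LCS with error-tolerance δ and has rank(S) ≥ c · (1/δ) · log₂(δn). -/
open scoped BigOperators

/-- A linear spanoid built from a vector configuration. -/
def linSpanoid {X V : Type} [AddCommGroup V] [Module (ZMod 2) V] (φ : X → V) : SpanoidOn X :=
  {p | φ p.2 ∈ Submodule.span (ZMod 2) (φ '' p.1)}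

theorem finrank_le_rank_linSpanoid {X V : Type} [Fintype X] [AddCommGroup V] [Module (ZMod 2) V]
    [Module.Finite (ZMod 2) V]
    (φ : X → V) (hφ : Submodule.span (ZMod 2) (Set.range φ) = ⊤) :
    Module.finrank (ZMod 2) V ≤ sRank (linSpanoid φ) := by
  unfold sRank
  apply le_csInf
  · refine ⟨_, Set.univ, rfl, ?_⟩
    apply Set.eq_univ_of_univ_subset
    exact Set.subset_sInter fun T' hT' => hT'.1
  · rintro k ⟨T, rfl, hT⟩
    have hcl : sSpan (linSpanoid φ) T ⊆ {j | φ j ∈ Submodule.span (ZMod 2) (φ '' T)} := by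
      apply Set.sInter_subset_of_mem
      refine ⟨fun j hj => Submodule.subset_span ⟨j, hj, rfl⟩, ?_⟩
      intro p hp hsub
      have hp' : φ p.2 ∈ Submodule.span (ZMod 2) (φ '' p.1) := hp
      change φ p.2 ∈ Submodule.span (ZMod 2) (φ '' T)
      refine (Submodule.span_le.2 ?_) hp'
      rintro _ ⟨a, ha, rfl⟩
      exact hsub ha
    have htop : Submodule.span (ZMod 2) (φ '' T) = ⊤ := by
      rw [eq_top_iff, ← hφ, Submodule.span_le]
      rintro _ ⟨a, rfl⟩
      have : a ∈ sSpan (linSpanoid φ) T := by rw [hT]; trivial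
      exact hcl this
    have hfin : (φ '' T).Finite := Set.toFinite _
    have h1 := finrank_span_finset_le_card (R := ZMod 2) hfin.toFinset
    rw [Set.finrank, hfin.coe_toFinset, htop, finrank_top, ← Set.ncard_eq_toFinset_card _ hfin] at h1
    exact h1.trans (Set.ncard_image_le (Set.toFinite _))

theorem exists_LCS_aux (n g m : ℕ) (hg : 0 < g) (h : g * 2 ^ (m + 1) ≤ n) :
    ∃ S : SpanoidOn (Fin n), (∀ δ : ℝ, δ * n ≤ (2 : ℝ) ^ m → sIsLCS 2 δ S) ∧
      g * (m + 1) ≤ sRank S := by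
  classical
  let W := Fin (m + 1) → ZMod 2
  have hcard : Fintype.card (Fin g × W) = g * 2 ^ (m + 1) := by
    simp [W, ZMod.card]
  obtain ⟨e⟩ : Nonempty (Fin g × W ↪ Fin n) := by
    apply Function.Embedding.nonempty_of_card_le
    rw [hcard, Fintype.card_fin]; exact h
  let φ : Fin n → (Fin g → W) := Function.extend e (fun p => Pi.single p.1 p.2) 0
  have hφe : ∀ a w, φ (e (a, w)) = Pi.single a w := fun a w =>
    e.injective.extend_apply _ _ _
  have hφ : ∀ i, ∃ a w, φ i = Pi.single a w := by
    intro i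
    by_cases hi : ∃ p, e p = i
    · obtain ⟨⟨a, w⟩, rfl⟩ := hi
      exact ⟨a, w, hφe a w⟩
    · refine ⟨⟨0, hg⟩, 0, ?_⟩
      simp [φ, Function.extend_apply' _ _ _ hi]
  refine ⟨linSpanoid φ, ?_, ?_⟩
  · intro δ hδ i
    obtain ⟨a, w, hw⟩ := hφ i
    obtain ⟨v, hv0, hv⟩ : ∃ v : W, v ≠ 0 ∧
        (Pi.single a w : Fin g → W) ∈ Submodule.span (ZMod 2) {(Pi.single a v : Fin g → W)} := by
      by_cases hw0 : w = 0
      · refine ⟨fun _ => 1, ?_, ?_⟩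
        · intro h0
          have h01 : (1 : ZMod 2) = 0 := congrFun h0 0
          exact one_ne_zero h01
        · rw [hw0, Pi.single_zero]; exact Submodule.zero_mem _
      · exact ⟨w, hw0, Submodule.mem_span_singleton_self _⟩
    have hvv : v + v = 0 := by
      funext j; exact CharTwo.add_self_eq_zero (v j)
    let f : W → Finset (Fin n) := fun u => {e (a, u), e (a, u + v)}
    have hne : ∀ u, e (a, u) ≠ e (a, u + v) := by
      intro u hu
      have := e.injective hu
      simp at this
      exact hv0 this
    have hf2 : ∀ u, (f u).card = 2 := fun u => Finset.card_pair (hne u)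
    have hfv : ∀ u, f (u + v) = f u := by
      intro u
      simp only [f, add_assoc, hvv, add_zero]
      exact Finset.pair_comm _ _
    have hmem : ∀ u u', e (a, u) ∈ f u' → f u = f u' := by
      intro u u' hu
      simp only [f, Finset.mem_insert, Finset.mem_singleton, EmbeddingLike.apply_eq_iff_eq,
        Prod.mk.injEq, true_and] at hu
      rcases hu with rfl | rfl
      · rfl
      · exact hfv u'
    have hex : ∀ u x, x ∈ f u → ∃ u', x = e (a, u') := by
      intro u x hx
      simp only [f, Finset.mem_insert, Finset.mem_singleton] at hx
      rcases hx with rfl | rfl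
      · exact ⟨_, rfl⟩
      · exact ⟨_, rfl⟩
    let M : Finset (Finset (Fin n)) := Finset.univ.image f
    have hdisj : (M : Set (Finset (Fin n))).Pairwise fun A B => Disjoint A B := by
      intro A hA B hB hAB
      simp only [M, Finset.coe_image, Finset.coe_univ, Set.image_univ, Set.mem_range] at hA hB
      obtain ⟨u, rfl⟩ := hA
      obtain ⟨u', rfl⟩ := hB
      rw [Finset.disjoint_left]
      intro x hx hx'
      obtain ⟨t, rfl⟩ := hex u x hx
      exact hAB ((hmem _ _ hx).symm.trans (hmem _ _ hx'))
    have hc2 : ∀ A ∈ M, A.card = 2 := by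
      intro A hA
      obtain ⟨u, -, rfl⟩ := Finset.mem_image.1 hA
      exact hf2 u
    have hMc : 2 ^ (m + 1) ≤ M.card * 2 := by
      have h1 : (M.biUnion id).card = ∑ A ∈ M, A.card := Finset.card_biUnion hdisj
      rw [Finset.sum_const_nat hc2] at h1
      rw [← h1]
      have h2 : (Finset.univ.image (fun u : W => e (a, u))).card = 2 ^ (m + 1) := by
        rw [Finset.card_image_of_injective]
        · simp [W, ZMod.card]
        · intro u u' huu
          have := e.injective huu
          simpa using this
      rw [← h2]
      apply Finset.card_le_card
      intro x hx
      obtain ⟨u, -, rfl⟩ := Finset.mem_image.1 hx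
      refine Finset.mem_biUnion.2 ⟨f u, Finset.mem_image_of_mem _ (Finset.mem_univ _), ?_⟩
      simp [f]
    refine ⟨M, ?_, hc2, hdisj, ?_⟩
    · refine hδ.trans ?_
      have : 2 ^ m ≤ M.card := by rw [pow_succ] at hMc; omega
      exact_mod_cast this
    · intro A hA
      obtain ⟨u, -, rfl⟩ := Finset.mem_image.1 hA
      change φ i ∈ Submodule.span (ZMod 2) (φ '' (f u : Set (Fin n)))
      rw [hw]
      refine (Submodule.span_le.2 ?_) hv
      rw [Set.singleton_subset_iff]
      have e1 : (Pi.single a v : Fin g → W) = φ (e (a, u + v)) - φ (e (a, u)) := by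
        rw [hφe, hφe, ← Pi.single_sub, add_sub_cancel_left]
      rw [e1]
      refine Submodule.sub_mem _ (Submodule.subset_span ⟨_, ?_, rfl⟩)
        (Submodule.subset_span ⟨_, ?_, rfl⟩)
      · simp [f]
      · simp [f]
  · have hr := finrank_le_rank_linSpanoid φ ?_
    · have : Module.finrank (ZMod 2) (Fin g → W) = g * (m + 1) := by
        simp [W, Module.finrank_pi_fintype]
      rwa [this] at hr
    · rw [eq_top_iff]
      intro x _
      rw [← Finset.univ_sum_single x]
      refine Submodule.sum_mem _ fun a _ => Submodule.subset_span ⟨e (a, x a), hφe _ _⟩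

/-- There are `c > 0` and `n₀` such that for every `0 < δ ≤ 1/4` and every
`n ≥ n₀/δ` there is a 2-LCS on `[n]` with error-tolerance `δ` of rank at least
`c · (1/δ) · log₂(δ n)`. -/
theorem exists_two_LCS_high_rank :
    ∃ c : ℝ, 0 < c ∧ ∃ n₀ : ℕ, ∀ δ : ℝ, 0 < δ → δ ≤ 1 / 4 →
      ∀ n : ℕ, (n₀ : ℝ) / δ ≤ (n : ℝ) →
        ∃ S : SpanoidOn (Fin n), sIsLCS 2 δ S ∧
          c * (1 / δ) * Real.logb 2 (δ * n) ≤ (sRank S : ℝ) := by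
  refine ⟨1 / 8, by norm_num, 1, ?_⟩
  intro δ hδ hδ4 n hn
  have hN : 1 ≤ δ * n := by
    rw [Nat.cast_one, div_le_iff₀ hδ] at hn
    linarith
  set m := Nat.clog 2 ⌈δ * n⌉₊ with hm
  have h1 : δ * n ≤ (2 : ℝ) ^ m := by
    have := Nat.le_pow_clog (b := 2) (by norm_num) ⌈δ * n⌉₊
    exact (Nat.le_ceil _).trans (by exact_mod_cast this)
  have h2 : (2 : ℝ) ^ m < 2 * (δ * n) := by
    rcases Nat.eq_zero_or_pos m with h0 | h0
    · rw [h0]; linarith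
    · have hlt : 2 ^ (m - 1) < ⌈δ * n⌉₊ := by
        rw [← Nat.lt_clog_iff_pow_lt (by norm_num)]; omega
      have h3 := Nat.lt_ceil.1 hlt
      push_cast at h3
      obtain ⟨t, ht⟩ : ∃ t, m = t + 1 := ⟨m - 1, by omega⟩
      rw [ht] at h3 ⊢
      rw [Nat.add_sub_cancel] at h3
      rw [pow_succ]; linarith
  have hle : 2 ^ (m + 1) ≤ n := by
    have : (2 : ℝ) ^ (m + 1) ≤ n := by
      rw [pow_succ]
      have : (0 : ℝ) ≤ n := Nat.cast_nonneg n
      nlinarith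
    exact_mod_cast this
  have hpos : 0 < 2 ^ (m + 1) := by positivity
  set g := n / 2 ^ (m + 1) with hgdef
  have hg : 0 < g := Nat.div_pos hle hpos
  obtain ⟨S, hS, hr⟩ := exists_LCS_aux n g m hg (Nat.div_mul_le_self _ _)
  refine ⟨S, hS δ h1, ?_⟩
  have hg2 : n < 2 * g * 2 ^ (m + 1) := by
    have := Nat.lt_mul_div_succ n hpos
    rw [← hgdef] at this
    nlinarith
  have hg3 : (n : ℝ) < 2 * g * 2 ^ (m + 1) := by exact_mod_cast hg2
  have hgR : (0 : ℝ) < g := by exact_mod_cast hg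
  have hnR : (0 : ℝ) < n := by
    by_contra hc
    have : (0 : ℝ) ≤ n := Nat.cast_nonneg n
    nlinarith
  have hgδ : 1 / 8 * (1 / δ) ≤ (g : ℝ) := by
    have h4 : (n : ℝ) < n * (8 * g * δ) := by
      calc (n : ℝ) < 4 * g * 2 ^ m := by rw [pow_succ] at hg3; linarith
        _ ≤ 4 * g * (2 * (δ * n)) := by gcongr
        _ = n * (8 * g * δ) := by ring
    have h5 : 1 < 8 * g * δ := by
      by_contra hc
      push Not at hc
      nlinarith
    rw [mul_one_div, div_le_iff₀ hδ]
    linarith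
  have hlog : Real.logb 2 (δ * n) ≤ (m + 1 : ℝ) := by
    rw [Real.logb_le_iff_le_rpow (by norm_num) (by linarith)]
    have : (2 : ℝ) ^ ((m : ℝ) + 1) = 2 ^ (m + 1) := by exact_mod_cast Real.rpow_natCast 2 (m + 1)
    rw [this, pow_succ]
    linarith
  have hlog0 : 0 ≤ Real.logb 2 (δ * n) := Real.logb_nonneg (by norm_num) hN
  calc 1 / 8 * (1 / δ) * Real.logb 2 (δ * n) ≤ g * (m + 1 : ℝ) := by gcongr
    _ ≤ sRank S := by exact_mod_cast hr
end

section
/- There exist absolute constants c, C > 0 such that for every integer n ≥ 4 and every spanoid S on [n], there exist a finite alphabet Σ with log₂|Σ| ≤ C · log₂ n / log₂ log₂ n and a code C' ⊆ Σ^n consistent with S whose dimension satisfies dim(C') ≥ c · (log₂ log₂ n / log₂ n) · LP^cover(S). -/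
open scoped BigOperators

lemma sOpen_rule {X : Type} {S : SpanoidOn X} {B : Set X} (hB : sOpen S B)
    {p : Set X × X} (hp : p ∈ S) (hi : p.2 ∈ B) : ∃ a ∈ p.1, a ∈ B := by
  by_contra h
  push Not at h
  have h1 : p.2 ∈ sSpan S Bᶜ := by
    rintro T ⟨hT, hr⟩
    exact hr p hp (fun a ha => hT (h a ha))
  unfold sOpen sClosed at hB
  rw [hB] at h1
  exact h1 hi

lemma sLPcover_le {n : ℕ} (S : SpanoidOn (Fin n)) (x : Fin n → ℝ) (hx : ∀ i, 0 ≤ x i)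
    (h : ∀ B : Set (Fin n), B.Nonempty → sOpen S B → 1 ≤ ∑ i, B.indicator x i) :
    sLPcover S ≤ ∑ i, x i := by
  apply csInf_le
  · refine ⟨0, ?_⟩
    rintro y ⟨x, hx, -, rfl⟩
    exact Finset.sum_nonneg fun i _ => hx i
  · exact ⟨x, hx, h, rfl⟩

lemma exists_open_of_pos {n : ℕ} (S : SpanoidOn (Fin n)) (hL : 0 < sLPcover S) :
    ∃ B : Set (Fin n), B.Nonempty ∧ sOpen S B := by
  by_contra hne
  push Not at hne
  have := sLPcover_le S (fun _ => 0) (fun _ => le_rfl) (fun B h1 h2 => absurd h2 (hne B h1))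
  simp at this
  linarith

lemma one_le_sLPcover {n : ℕ} (S : SpanoidOn (Fin n)) (hL : 0 < sLPcover S) :
    1 ≤ sLPcover S := by
  obtain ⟨B, hB, hBo⟩ := exists_open_of_pos S hL
  apply le_csInf
  · refine ⟨_, fun _ => 1, fun _ => zero_le_one, ?_, rfl⟩
    rintro B ⟨b, hb⟩ -
    calc (1:ℝ) = B.indicator (fun _ => (1:ℝ)) b := by simp [hb]
      _ ≤ _ := Finset.single_le_sum (f := fun i => B.indicator (fun _ => (1:ℝ)) i)
        (fun i _ => Set.indicator_nonneg (fun _ _ => zero_le_one) i) (Finset.mem_univ b)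
  · rintro y ⟨x, hx, hc, rfl⟩
    exact (hc B hB hBo).trans (Finset.sum_le_sum fun i _ => Set.indicator_le_self' (fun _ _ => hx i) i)

lemma light_open {n : ℕ} (S : SpanoidOn (Fin n)) (hL : 0 < sLPcover S)
    (w : Fin n → ℝ) (hw : ∀ i, 0 < w i) :
    ∃ B : Set (Fin n), B.Nonempty ∧ sOpen S B ∧
      ∑ i, B.indicator w i ≤ (∑ i, w i) / sLPcover S := by
  obtain ⟨B, ⟨⟨b, hb⟩, hBo⟩, hmin⟩ := Set.exists_min_image
    {B : Set (Fin n) | B.Nonempty ∧ sOpen S B} (fun B => ∑ i, B.indicator w i)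
    (Set.toFinite _) (exists_open_of_pos S hL)
  refine ⟨B, ⟨b, hb⟩, hBo, ?_⟩
  have hpos : 0 < ∑ i, B.indicator w i := by
    apply Finset.sum_pos'
    · exact fun i _ => Set.indicator_nonneg (fun i _ => (hw i).le) i
    · exact ⟨b, Finset.mem_univ b, by simp [hb, hw b]⟩
  have := sLPcover_le S (fun i => (∑ i, B.indicator w i)⁻¹ * w i)
    (fun i => mul_nonneg (inv_nonneg.2 hpos.le) (hw i).le) (by
      intro B' h1 h2
      have h3 := hmin B' ⟨h1, h2⟩
      simp only [Set.indicator_const_mul]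
      rw [← Finset.mul_sum, inv_mul_eq_div, one_le_div hpos]
      exact h3)
  rw [← Finset.mul_sum, inv_mul_eq_div, le_div_iff₀ hpos] at this
  rw [le_div_iff₀ hL]
  linarith

open Classical in
lemma greedy {n : ℕ} (S : SpanoidOn (Fin n)) (hL : 0 < sLPcover S) (a : ℝ) (ha : 0 ≤ a) (k : ℕ) :
    ∃ B : Fin k → Set (Fin n), (∀ j, (B j).Nonempty ∧ sOpen S (B j)) ∧
      ∑ i, ∏ j, (if i ∈ B j then 1 + a else 1) ≤ n * (1 + a / sLPcover S) ^ k := by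
  induction k with
  | zero => exact ⟨fun _ => ∅, fun j => j.elim0, by simp⟩
  | succ k ih =>
    obtain ⟨B, hB, hW⟩ := ih
    obtain ⟨B0, h1, h2, h3⟩ := light_open S hL
      (fun i => ∏ j, (if i ∈ B j then 1 + a else 1)) (fun i => Finset.prod_pos fun j _ => by
        split_ifs <;> linarith)
    refine ⟨Fin.cons B0 B, fun j => ?_, ?_⟩
    · refine Fin.cases ?_ (fun j => ?_) j
      · simpa using ⟨h1, h2⟩
      · simpa using hB j
    · simp only [Fin.prod_univ_succ, Fin.cons_zero, Fin.cons_succ]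
      set w : Fin n → ℝ := fun i => ∏ j, (if i ∈ B j then 1 + a else 1) with hw
      have e : ∀ i, (if i ∈ B0 then 1 + a else 1) * w i = w i + a * B0.indicator w i := by
        intro i
        by_cases h : i ∈ B0 <;> simp [h] <;> ring
      have : ∑ i, (if i ∈ B0 then 1 + a else 1) * w i = ∑ i, w i + a * ∑ i, B0.indicator w i := by
        simp only [e, Finset.sum_add_distrib, Finset.mul_sum]
      change ∑ i, (if i ∈ B0 then 1 + a else 1) * w i ≤ _
      rw [this]
      calc _ ≤ ∑ i, w i + a * ((∑ i, w i) / sLPcover S) := by gcongr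
        _ = (∑ i, w i) * (1 + a / sLPcover S) := by ring
        _ ≤ (n * (1 + a / sLPcover S) ^ k) * (1 + a / sLPcover S) := by gcongr
        _ = _ := by ring

open Classical in
lemma code_of_opens {n k d : ℕ} (S : SpanoidOn (Fin n)) (B : Fin k → Set (Fin n))
    (hB : ∀ j, (B j).Nonempty ∧ sOpen S (B j))
    (hd : ∀ i, (Finset.univ.filter fun j => i ∈ B j).card ≤ d) :
    ∃ C' : Set (Fin n → Fin (2 ^ d)), sConsistent S C' ∧ Nat.card C' = 2 ^ k := by
  have henc : ∀ i, ∃ e : ({j // i ∈ B j} → Bool) → Fin (2 ^ d), Function.Injective e := by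
    intro i
    have : Fintype.card ({j // i ∈ B j} → Bool) ≤ Fintype.card (Fin (2 ^ d)) := by
      simp only [Fintype.card_fun, Fintype.card_bool, Fintype.card_fin]
      rw [Fintype.card_subtype]
      exact Nat.pow_le_pow_right (by norm_num) (hd i)
    obtain ⟨e⟩ := Function.Embedding.nonempty_of_card_le this
    exact ⟨e, e.injective⟩
  choose e he using henc
  let φ : (Fin k → Bool) → (Fin n → Fin (2 ^ d)) := fun b i => e i (fun j => b j.1)
  have key : ∀ b b' i, φ b i = φ b' i → ∀ j, i ∈ B j → b j = b' j := by
    intro b b' i h j hj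
    exact congrFun (he i h) ⟨j, hj⟩
  have hφ : Function.Injective φ := by
    intro b b' h
    funext j
    obtain ⟨i, hi⟩ := (hB j).1
    exact key b b' i (congrFun h i) j hi
  refine ⟨Set.range φ, ?_, ?_⟩
  · intro p hp
    refine ⟨fun v => if h : ∃ b, v = fun a => φ b a.1 then φ h.choose p.2
      else ⟨0, by positivity⟩, ?_⟩
    rintro _ ⟨b, rfl⟩
    have hex : ∃ b', (fun a : p.1 => φ b a.1) = fun a => φ b' a.1 := ⟨b, rfl⟩
    beta_reduce
    rw [dif_pos hex]
    have hs := hex.choose_spec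
    generalize hex.choose = b' at hs
    change e _ _ = e _ _
    congr 1
    funext j
    obtain ⟨a, ha, haB⟩ := sOpen_rule (hB j.1).2 hp j.2
    exact key b b' a (congrFun hs ⟨a, ha⟩) j.1 haB
  · rw [Nat.card_congr (Equiv.ofInjective φ hφ).symm]
    simp

/-- For every spanoid `S` on `[n]` (`n ≥ 4`) there is a consistent code over an
alphabet with `log₂|Σ| ≤ C · log₂ n / log₂ log₂ n` of dimension at least
`c · (log₂ log₂ n / log₂ n) · LP^cover(S)`. -/
theorem small_alphabet_consistent_code :
    ∃ c C : ℝ, 0 < c ∧ 0 < C ∧ ∀ n : ℕ, 4 ≤ n → ∀ S : SpanoidOn (Fin n),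
      ∃ m : ℕ, 2 ≤ m ∧
        Real.logb 2 m ≤ C * Real.logb 2 n / Real.logb 2 (Real.logb 2 n) ∧
        ∃ C' : Set (Fin n → Fin m), sConsistent S C' ∧
          c * (Real.logb 2 (Real.logb 2 n) / Real.logb 2 n) * sLPcover S ≤
            Real.log (Nat.card C') / Real.log m := by
  classical
  refine ⟨1 / 4, 4, by norm_num, by norm_num, fun n hn S => ?_⟩
  set a := Real.logb 2 n with ha
  set l := Real.logb 2 a with hl
  have hnR : (4:ℝ) ≤ n := by exact_mod_cast hn
  have hlog2 : 0 < Real.log 2 := Real.log_pos (by norm_num)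
  have ha2 : 2 ≤ a := by
    rw [ha, Real.le_logb_iff_rpow_le (by norm_num) (by linarith)]
    norm_num; exact hn
  have hl1 : 1 ≤ l := by
    rw [hl, Real.le_logb_iff_rpow_le (by norm_num) (by linarith)]
    norm_num; exact ha2
  have hla : l ≤ a := by
    rw [hl, Real.logb_le_iff_le_rpow (by norm_num) (by linarith)]
    have := one_add_mul_self_le_rpow_one_add (s := 1) (by norm_num) (p := a) (by linarith)
    norm_num at this
    linarith
  set d := ⌊4 * a / l⌋₊ with hd
  have hdle : (d:ℝ) ≤ 4 * a / l := Nat.floor_le (by positivity)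
  have hd1 : 1 ≤ d := by
    apply Nat.le_floor
    rw [le_div_iff₀ (by linarith)]
    push_cast; linarith
  have hm2 : 2 ≤ 2 ^ d := by
    calc 2 = 2 ^ 1 := rfl
      _ ≤ 2 ^ d := Nat.pow_le_pow_right (by norm_num) hd1
  refine ⟨2 ^ d, hm2, ?_, ?_⟩
  · push_cast
    rw [Real.logb_pow, Real.logb_self_eq_one (by norm_num)]
    linarith
  rcases le_or_gt (sLPcover S) 0 with hL | hL
  · refine ⟨∅, fun p _ => ⟨fun _ => ⟨0, by positivity⟩, by simp⟩, ?_⟩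
    simp only [Nat.card_of_isEmpty, Nat.cast_zero, Real.log_zero, zero_div]
    apply mul_nonpos_of_nonneg_of_nonpos _ hL
    positivity
  have hL1 := one_le_sLPcover S hL
  set L := sLPcover S with hLdef
  set k := ⌈L⌉₊ with hk
  have hkL : L ≤ k := Nat.le_ceil L
  have hk2 : (k:ℝ) ≤ 2 * L := by
    have := Nat.ceil_lt_add_one hL.le
    linarith
  obtain ⟨B, hB, hW⟩ := greedy S hL a (by linarith) k
  have hload : ∀ i, (Finset.univ.filter fun j => i ∈ B j).card ≤ d := by
    intro i
    apply Nat.le_floor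
    set q := (Finset.univ.filter fun j => i ∈ B j).card with hq
    have h1 : (1 + a) ^ q ≤ n * (1 + a / L) ^ k := by
      refine le_trans ?_ hW
      refine le_trans (le_of_eq ?_) (Finset.single_le_sum
        (f := fun i => ∏ j, (if i ∈ B j then 1 + a else 1))
        (fun i _ => Finset.prod_nonneg fun j _ => by split_ifs <;> linarith) (Finset.mem_univ i))
      rw [Finset.prod_ite]
      simp [hq]
    have h2 : (q:ℝ) * Real.log (1 + a) ≤ Real.log n + k * Real.log (1 + a / L) := by
      have h0 : 0 < 1 + a / L := by positivity
      have := Real.log_le_log (by positivity) h1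
      rwa [Real.log_pow, Real.log_mul (by positivity) (by positivity), Real.log_pow] at this
    have h3 : (k:ℝ) * Real.log (1 + a / L) ≤ 2 * a := by
      have h0 : 0 < 1 + a / L := by positivity
      have := Real.log_le_sub_one_of_pos h0
      calc (k:ℝ) * Real.log (1 + a / L) ≤ (2 * L) * (a / L) := by
            apply mul_le_mul hk2 (by linarith) (Real.log_nonneg _) (by linarith)
            have : 0 ≤ a / L := by positivity
            linarith
        _ = 2 * a := by field_simp
    have h4 : Real.log n = a * Real.log 2 := by
      rw [ha, Real.logb, div_mul_cancel₀ _ hlog2.ne']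
    have h5 : l * Real.log 2 ≤ Real.log (1 + a) := by
      rw [hl, Real.logb, div_mul_cancel₀ _ hlog2.ne']
      exact Real.log_le_log (by linarith) (by linarith)
    have h6 := Real.log_two_gt_d9
    rw [le_div_iff₀ (by linarith)]
    have h7 : (q:ℝ) * (l * Real.log 2) ≤ q * Real.log (1 + a) := by gcongr
    have h8 : (q * l) * Real.log 2 ≤ (4 * a) * Real.log 2 := by nlinarith
    exact le_of_mul_le_mul_right h8 hlog2
  obtain ⟨C', hC, hcard⟩ := code_of_opens S B hB hload
  refine ⟨C', hC, ?_⟩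
  rw [hcard]
  push_cast
  rw [Real.log_pow, Real.log_pow, mul_div_mul_right _ _ hlog2.ne']
  have hdpos : (0:ℝ) < d := by exact_mod_cast hd1
  rw [le_div_iff₀ hdpos]
  calc 1 / 4 * (l / a) * L * d ≤ 1 / 4 * (l / a) * L * (4 * a / l) := by gcongr
    _ = L := by field_simp
    _ ≤ k := hkL
end

section
/- For every integer k ≥ 1 there exists a spanoid S on n = 5^k elements with rank(S) = 3^k and f-rank(S) ≤ (5/2)^k; consequently rank(S) ≥ n^c · f-rank(S), where c = log₅ 3 − log₅(5/2) ≥ 0.113. -/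
open scoped BigOperators

namespace Gap

theorem subset_span {X : Type} (S : SpanoidOn X) (T : Set X) : T ⊆ sSpan S T :=
  fun _ hx _ hT => hT.1 hx

theorem span_rule {X : Type} (S : SpanoidOn X) (T : Set X) (p : Set X × X) (hp : p ∈ S)
    (h : p.1 ⊆ sSpan S T) : p.2 ∈ sSpan S T := by
  intro T' hT'
  exact hT'.2 p hp (fun x hx => h hx T' hT')

theorem span_min {X : Type} (S : SpanoidOn X) (T T' : Set X) (h : T ⊆ T')
    (h' : ∀ p ∈ S, p.1 ⊆ T' → p.2 ∈ T') : sSpan S T ⊆ T' :=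
  fun _ hx => hx T' ⟨h, h'⟩

/-- Feasibility of an entropy-like function with bound `t` on singletons. -/
structure Feas {X : Type} (S : SpanoidOn X) (f : Set X → ℝ) (t : ℝ) : Prop where
  empty : f ∅ = 0
  single : ∀ i, f {i} ≤ t
  submod : ∀ A B : Set X, f (A ∪ B) + f (A ∩ B) ≤ f A + f B
  span : ∀ A B : Set X, B ⊆ sSpan S A → f B ≤ f A

/-- The inductive package. -/
structure Good (k : ℕ) {X : Type} (S : SpanoidOn X) : Prop where
  attained : ∃ T : Set X, T.ncard = 3 ^ k ∧ sSpan S T = Set.univ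
  lower : ∀ T : Set X, sSpan S T = Set.univ → 3 ^ k ≤ T.ncard
  bound : ∀ (f : Set X → ℝ) (t : ℝ), Feas S f t → f Set.univ ≤ (5 / 2 : ℝ) ^ k * t

theorem good_zero : Good 0 (∅ : SpanoidOn Unit) := by
  refine ⟨⟨Set.univ, by simp, ?_⟩, ?_, ?_⟩
  · exact Set.eq_univ_of_univ_subset (subset_span _ _)
  · intro T hT
    by_contra h
    have h0 : T.ncard = 0 := by simp at h ⊢; exact h
    rw [Set.ncard_eq_zero] at h0
    have := span_min (∅ : SpanoidOn Unit) T ∅ h0.subset (by simp)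
    rw [hT] at this
    exact this (Set.mem_univ ())
  · intro f t h
    have : (Set.univ : Set Unit) = {()} := by ext; simp
    rw [this]; simpa using h.single ()

/-- Semi-direct product of the pentagon spanoid with `S`. -/
def step {X : Type} (S : SpanoidOn X) : SpanoidOn (Fin 5 × X) :=
  {p | (∃ a, ∃ q ∈ S, p = (Prod.mk a '' q.1, (a, q.2))) ∨
    (∃ i x, p = ({y | y.1 = i - 1 ∨ y.1 = i + 1}, (i, x)))}

theorem step_fiber {X : Type} (S : SpanoidOn X) (a : Fin 5) (T : Set X) (Y : Set (Fin 5 × X))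
    (h : Prod.mk a '' T ⊆ sSpan (step S) Y) :
    Prod.mk a '' sSpan S T ⊆ sSpan (step S) Y := by
  rw [Set.image_subset_iff] at h ⊢
  refine span_min _ _ _ h ?_
  intro p hp hp1
  refine span_rule (step S) Y (Prod.mk a '' p.1, (a, p.2)) (Or.inl ⟨a, p, hp, rfl⟩) ?_
  simpa [Set.image_subset_iff] using hp1

def fib (X : Type) (A : Finset (Fin 5)) : Set (Fin 5 × X) := {y | y.1 ∈ A}

theorem step_fib {X : Type} (S : SpanoidOn X) (A : Finset (Fin 5)) (Y : Set (Fin 5 × X))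
    (h : fib X A ⊆ sSpan (step S) Y) (i : Fin 5) (h1 : i - 1 ∈ A) (h2 : i + 1 ∈ A) :
    fib X (insert i A) ⊆ sSpan (step S) Y := by
  rintro ⟨a, x⟩ hy
  simp only [fib, Set.mem_ofPred_eq, Finset.mem_insert] at hy
  rcases hy with rfl | hy
  · refine span_rule (step S) Y ({y | y.1 = a - 1 ∨ y.1 = a + 1}, (a, x))
      (Or.inr ⟨a, x, rfl⟩) ?_
    rintro ⟨b, z⟩ hb
    apply h
    rcases hb with hb | hb
    · simp only at hb; subst hb; exact h1
    · simp only at hb; subst hb; exact h2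
  · exact h hy

theorem fib_univ (X : Type) (A : Finset (Fin 5)) (h : A = Finset.univ) :
    fib X A = Set.univ := by
  subst h; ext; simp [fib]

theorem step_bound {X : Type} (S : SpanoidOn X) (k : ℕ) (hS : Good k S)
    (f : Set (Fin 5 × X) → ℝ) (t : ℝ) (hf : Feas (step S) f t) :
    f Set.univ ≤ (5 / 2 : ℝ) ^ (k + 1) * t := by
  have hg : ∀ a : Fin 5, f (fib X {a}) ≤ (5 / 2 : ℝ) ^ k * t := by
    intro a
    have := hS.bound (fun B => f (Prod.mk a '' B)) t
      ⟨by simpa using hf.empty, by intro i; simpa using hf.single (a, i), by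
        intro A B
        rw [Set.image_union, Set.image_inter (Prod.mk_right_injective a)]
        exact hf.submod _ _, by
        intro A B hB
        exact hf.span _ _ ((Set.image_mono hB).trans
          (step_fiber S a A _ (subset_span _ _)))⟩
    have e : fib X {a} = Prod.mk a '' Set.univ := by
      ext ⟨b, x⟩
      simp [fib, eq_comm]
    rw [e]; exact this
  have hsub : ∀ A B : Finset (Fin 5),
      f (fib X (A ∪ B)) + f (fib X (A ∩ B)) ≤ f (fib X A) + f (fib X B) := by
    intro A B
    have e1 : fib X (A ∪ B) = fib X A ∪ fib X B := by ext; simp [fib]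
    have e2 : fib X (A ∩ B) = fib X A ∩ fib X B := by ext; simp [fib]
    rw [e1, e2]; exact hf.submod _ _
  have hins : ∀ (i : Fin 5) (A : Finset (Fin 5)), i - 1 ∈ A → i + 1 ∈ A →
      f (fib X (insert i A)) ≤ f (fib X A) := fun i A h1 h2 =>
    hf.span _ _ (step_fib S A _ (subset_span _ _) i h1 h2)
  have h0 : f (fib X ∅) = 0 := by
    have : fib X ∅ = ∅ := by ext; simp [fib]
    rw [this]; exact hf.empty
  have a1 := hsub {0} {2}
  have a2 := hsub {4} {1}
  have a3 := hins 1 ({0} ∪ {2}) (by decide) (by decide)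
  have a4 := hins 0 ({4} ∪ {1}) (by decide) (by decide)
  have a5 := hsub (insert 1 ({0} ∪ {2})) (insert 0 ({4} ∪ {1}))
  have a6 := hins 3 (insert 1 ({0} ∪ {2}) ∪ insert 0 ({4} ∪ {1})) (by decide) (by decide)
  have a7 := hsub {0, 1} {3}
  have a8 := hins 2 ({0, 1} ∪ {3}) (by decide) (by decide)
  have a9 := hins 4 (insert 2 ({0, 1} ∪ {3})) (by decide) (by decide)
  rw [show ({0} ∩ {2} : Finset (Fin 5)) = ∅ by decide, h0] at a1
  rw [show ({4} ∩ {1} : Finset (Fin 5)) = ∅ by decide, h0] at a2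
  rw [show ({0, 1} ∩ {3} : Finset (Fin 5)) = ∅ by decide, h0] at a7
  rw [show (insert 1 ({0} ∪ {2}) ∩ insert 0 ({4} ∪ {1}) : Finset (Fin 5)) = {0, 1} by decide]
    at a5
  rw [fib_univ X (insert 3 _) (by decide)] at a6
  rw [fib_univ X (insert 4 _) (by decide)] at a9
  have g0 := hg 0
  have g1 := hg 1
  have g2 := hg 2
  have g3 := hg 3
  have g4 := hg 4
  rw [pow_succ]
  linarith

theorem pentagon_lower : ∀ F : Finset (Fin 5), F.card ≤ 2 → ∃ F' : Finset (Fin 5),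
    F ⊆ F' ∧ F' ≠ Finset.univ ∧ ∀ i, i - 1 ∈ F' → i + 1 ∈ F' → i ∈ F' := by
  decide

theorem ncard_fibers {X : Type} [Finite X] (T : Set (Fin 5 × X)) :
    T.ncard = ∑ a : Fin 5, {x | (a, x) ∈ T}.ncard := by
  have e : T ≃ Σ a : Fin 5, {x | (a, x) ∈ T} :=
    { toFun := fun y => ⟨y.1.1, y.1.2, y.2⟩
      invFun := fun z => ⟨(z.1, z.2.1), z.2.2⟩
      left_inv := fun _ => rfl
      right_inv := fun _ => rfl }
  rw [← Nat.card_coe_set_eq, Nat.card_congr e, Nat.card_sigma]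
  simp only [Nat.card_coe_set_eq]

theorem step_lower {X : Type} [Finite X] (S : SpanoidOn X) (k : ℕ) (hS : Good k S)
    (T : Set (Fin 5 × X)) (hT : sSpan (step S) T = Set.univ) : 3 ^ (k + 1) ≤ T.ncard := by
  classical
  let F : Finset (Fin 5) := Finset.univ.filter (fun a => sSpan S {x | (a, x) ∈ T} = Set.univ)
  have hF : 3 ≤ F.card := by
    by_contra hlt
    obtain ⟨F', hFF, hne, hcl⟩ := pentagon_lower F (by omega)
    have key := span_min (step S) T {y | y.1 ∈ F' ∨ y.2 ∈ sSpan S {x | (y.1, x) ∈ T}}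
      (fun y hy => Or.inr (subset_span _ _ hy)) (by
        rintro p (⟨a, q, hq, rfl⟩ | ⟨i, x, rfl⟩) hp
        · by_cases ha : a ∈ F'
          · exact Or.inl ha
          · refine Or.inr (span_rule _ _ q hq ?_)
            intro x hx
            have := hp (Set.mem_image_of_mem (Prod.mk a) hx)
            rcases this with h | h
            · exact absurd h ha
            · exact h
        · have aux : ∀ b, (b = i - 1 ∨ b = i + 1) → b ∈ F' := by
            intro b hb
            by_contra hbF
            apply hbF
            apply hFF
            simp only [F, Finset.mem_filter, Finset.mem_univ, true_and]
            apply Set.eq_univ_of_forall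
            intro z
            rcases hp (show (b, z) ∈ _ from hb) with h | h
            · exact absurd h hbF
            · exact h
          exact Or.inl (hcl i (aux _ (Or.inl rfl)) (aux _ (Or.inr rfl))))
    rw [hT] at key
    apply hne
    apply Finset.eq_univ_of_forall
    intro a
    by_contra ha
    apply ha
    apply hFF
    simp only [F, Finset.mem_filter, Finset.mem_univ, true_and]
    apply Set.eq_univ_of_forall
    intro z
    rcases key (Set.mem_univ (a, z)) with h | h
    · exact absurd h ha
    · exact h
  rw [ncard_fibers]
  calc 3 ^ (k + 1) = 3 * 3 ^ k := by ring
    _ ≤ F.card * 3 ^ k := Nat.mul_le_mul_right _ hF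
    _ = ∑ a ∈ F, 3 ^ k := by simp
    _ ≤ ∑ a ∈ F, {x | (a, x) ∈ T}.ncard := by
        apply Finset.sum_le_sum
        intro a ha
        exact hS.lower _ (by simpa [F] using ha)
    _ ≤ _ := Finset.sum_le_sum_of_subset (Finset.subset_univ _)

theorem good_step {X : Type} [Finite X] (S : SpanoidOn X) (k : ℕ) (hS : Good k S) :
    Good (k + 1) (step S) := by
  refine ⟨?_, step_lower S k hS, step_bound S k hS⟩
  obtain ⟨T, hc, hT⟩ := hS.attained
  refine ⟨(({0, 1, 3} : Finset (Fin 5)) : Set (Fin 5)) ×ˢ T, ?_, ?_⟩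
  · rw [Set.ncard_prod, Set.ncard_coe_finset, hc, pow_succ, mul_comm]
    rfl
  · have h1 : fib X {0, 1, 3} ⊆
        sSpan (step S) ((({0, 1, 3} : Finset (Fin 5)) : Set (Fin 5)) ×ˢ T) := by
      rintro ⟨a, x⟩ ha
      apply step_fiber S a T
      · rintro _ ⟨z, hz, rfl⟩
        exact subset_span _ _ ⟨ha, hz⟩
      · exact ⟨x, by rw [hT]; trivial, rfl⟩
    have h2 := step_fib S _ _ h1 2 (by decide) (by decide)
    have h3 := step_fib S _ _ h2 4 (by decide) (by decide)
    rw [fib_univ X (insert 4 _) (by decide)] at h3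
    exact Set.eq_univ_of_univ_subset h3

/-- Transport along an equivalence. -/
def trans {X Y : Type} (e : X ≃ Y) (S : SpanoidOn X) : SpanoidOn Y :=
  {p | (e ⁻¹' p.1, e.symm p.2) ∈ S}

theorem trans_span {X Y : Type} (e : X ≃ Y) (S : SpanoidOn X) (T : Set X) :
    sSpan (trans e S) (e '' T) = e '' sSpan S T := by
  apply Set.Subset.antisymm
  · apply span_min
    · exact Set.image_mono (subset_span _ _)
    · intro p hp h
      refine ⟨e.symm p.2, span_rule S T _ hp ?_, by simp⟩
      intro x hx
      obtain ⟨z, hz, hzx⟩ := h hx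
      rwa [← e.injective hzx]
  · rw [Set.image_subset_iff]
    apply span_min
    · rw [← Set.image_subset_iff]; exact subset_span _ _
    · intro p hp h
      refine span_rule (trans e S) _ (e '' p.1, e p.2) ?_ ?_
      · simpa [trans, Set.preimage_image_eq _ e.injective] using hp
      · rwa [Set.image_subset_iff]

theorem good_trans {X Y : Type} (e : X ≃ Y) (S : SpanoidOn X) (k : ℕ) (hS : Good k S) :
    Good k (trans e S) := by
  refine ⟨?_, ?_, ?_⟩
  · obtain ⟨T, hc, hT⟩ := hS.attained
    exact ⟨e '' T, by rw [Set.ncard_image_of_injective _ e.injective, hc], by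
      rw [trans_span, hT]; simp⟩
  · intro T hT
    obtain ⟨T, rfl⟩ : ∃ T', T = e '' T' := ⟨e ⁻¹' T, by simp⟩
    rw [Set.ncard_image_of_injective _ e.injective]
    apply hS.lower
    rw [trans_span] at hT
    apply e.injective.image_injective
    rw [hT]; simp
  · intro f t hf
    have := hS.bound (fun A => f (e '' A)) t
      ⟨by simpa using hf.empty, by intro i; simpa using hf.single (e i), by
        intro A B
        rw [Set.image_union, Set.image_inter e.injective]
        exact hf.submod _ _, by
        intro A B hB
        exact hf.span _ _ (by rw [trans_span]; exact Set.image_mono hB)⟩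
    simpa using this

theorem exists_good (k : ℕ) : ∃ S : SpanoidOn (Fin (5 ^ k)), Good k S := by
  induction k with
  | zero => exact ⟨_, good_trans (Fintype.equivOfCardEq (by simp)) _ 0 good_zero⟩
  | succ k ih =>
    obtain ⟨S, hS⟩ := ih
    exact ⟨_, good_trans (Fintype.equivOfCardEq (by simp [pow_succ, mul_comm])) _ (k + 1)
      (good_step S k hS)⟩

section entropy
open Classical

/-- number of codewords agreeing with `c` on `A` -/
noncomputable def cnt {X K : Type} (C : Finset (X → K)) (A : Set X) (c : X → K) : ℕ :=
  (C.filter (fun d => Set.EqOn d c A)).card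

theorem cnt_pos {X K : Type} (C : Finset (X → K)) (A : Set X) (c : X → K) (hc : c ∈ C) :
    0 < cnt C A c :=
  Finset.card_pos.2 ⟨c, Finset.mem_filter.2 ⟨hc, fun _ _ => rfl⟩⟩

theorem cnt_congr {X K : Type} (C : Finset (X → K)) (A : Set X) (c d : X → K)
    (h : Set.EqOn c d A) : cnt C A c = cnt C A d := by
  unfold cnt
  congr 1
  apply Finset.filter_congr
  intro x _
  exact ⟨fun hx => hx.trans h, fun hx => hx.trans h.symm⟩

/-- sum of the reciprocals of class sizes over a class is at most one -/
theorem class_sum {X K : Type} (C : Finset (X → K)) (A : Set X) (P : (X → K) → Prop)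
    [DecidablePred P]
    (hP : ∀ c ∈ C, ∀ d ∈ C, P c → P d → Set.EqOn c d A) :
    ∑ c ∈ C.filter P, (1 / (cnt C A c : ℝ)) ≤ 1 := by
  rcases (C.filter P).eq_empty_or_nonempty with h | ⟨c0, h0⟩
  · rw [h]; simp
  · have hc0 := Finset.mem_filter.1 h0
    have hpos : (0 : ℝ) < cnt C A c0 := by exact_mod_cast cnt_pos C A c0 hc0.1
    calc ∑ c ∈ C.filter P, (1 / (cnt C A c : ℝ))
        = ∑ c ∈ C.filter P, (1 / (cnt C A c0 : ℝ)) := by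
          apply Finset.sum_congr rfl
          intro c hc
          have hc := Finset.mem_filter.1 hc
          rw [cnt_congr C A c c0 (hP c hc.1 c0 hc0.1 hc.2 hc0.2)]
      _ = (C.filter P).card * (1 / (cnt C A c0 : ℝ)) := by simp
      _ ≤ (cnt C A c0 : ℝ) * (1 / (cnt C A c0 : ℝ)) := by
          apply mul_le_mul_of_nonneg_right _ (by positivity)
          norm_cast
          apply Finset.card_le_card
          intro c hc
          have hc := Finset.mem_filter.1 hc
          exact Finset.mem_filter.2 ⟨hc.1, hP c hc.1 c0 hc0.1 hc.2 hc0.2⟩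
      _ = 1 := by field_simp

/-- unnormalized entropy -/
noncomputable def ent {X K : Type} (C : Finset (X → K)) (A : Set X) : ℝ :=
  ∑ c ∈ C, (Real.log C.card - Real.log (cnt C A c))

theorem ent_submod {X K : Type} (C : Finset (X → K)) (A B : Set X) :
    ent C (A ∪ B) + ent C (A ∩ B) ≤ ent C A + ent C B := by
  have hcount : ∑ c ∈ C, ((cnt C A c : ℝ) * cnt C B c) /
      (cnt C (A ∪ B) c * cnt C (A ∩ B) c) ≤ C.card := by
    have e1 : ∀ c ∈ C, ((cnt C A c : ℝ) * cnt C B c) / (cnt C (A ∪ B) c * cnt C (A ∩ B) c)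
        = ∑ c1 ∈ C, ∑ c2 ∈ C, if (Set.EqOn c1 c A ∧ Set.EqOn c2 c B) then
          (1 / (cnt C (A ∪ B) c : ℝ)) * (1 / (cnt C (A ∩ B) c1 : ℝ)) else 0 := by
      intro c hc
      have : ∀ c1 ∈ C, (∑ c2 ∈ C, if (Set.EqOn c1 c A ∧ Set.EqOn c2 c B) then
          (1 / (cnt C (A ∪ B) c : ℝ)) * (1 / (cnt C (A ∩ B) c1 : ℝ)) else 0) =
          if Set.EqOn c1 c A then (cnt C B c : ℝ) *
            ((1 / (cnt C (A ∪ B) c : ℝ)) * (1 / (cnt C (A ∩ B) c : ℝ))) else 0 := by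
        intro c1 _
        by_cases h : Set.EqOn c1 c A
        · simp only [h, true_and, if_true]
          rw [← Finset.sum_filter, Finset.sum_const, nsmul_eq_mul,
            cnt_congr C (A ∩ B) c1 c (h.mono Set.inter_subset_left)]
          rfl
        · simp [h]
      rw [Finset.sum_congr rfl this, ← Finset.sum_filter, Finset.sum_const, nsmul_eq_mul]
      change _ = (cnt C A c : ℝ) * _
      rw [div_eq_mul_inv, mul_inv, one_div, one_div]
      ring
    rw [Finset.sum_congr rfl e1, Finset.sum_comm]
    calc _ ≤ ∑ c1 ∈ C, (1 : ℝ) := ?_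
      _ = C.card := by simp
    apply Finset.sum_le_sum
    intro c1 hc1
    rw [Finset.sum_comm]
    have hpos : (0 : ℝ) < cnt C (A ∩ B) c1 := by exact_mod_cast cnt_pos C _ c1 hc1
    calc _ ≤ ∑ c2 ∈ C, if Set.EqOn c2 c1 (A ∩ B) then (1 / (cnt C (A ∩ B) c1 : ℝ)) else 0 := ?_
      _ = 1 := by
        rw [← Finset.sum_filter, Finset.sum_const, nsmul_eq_mul]
        change (cnt C (A ∩ B) c1 : ℝ) * _ = 1
        field_simp
    apply Finset.sum_le_sum
    intro c2 hc2
    rw [← Finset.sum_filter, ← Finset.sum_mul]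
    split_ifs with h
    · refine mul_le_of_le_one_left (by positivity) ?_
      apply class_sum
      rintro c _ d _ ⟨h1, h2⟩ ⟨h3, h4⟩ x (hx | hx)
      · rw [← h1 hx, ← h3 hx]
      · rw [← h2 hx, ← h4 hx]
    · rw [Finset.filter_false_of_mem]
      · simp
      · rintro c _ ⟨h1, h2⟩
        apply h
        intro x hx
        rw [h2 hx.2, h1 hx.1]
  have hterm : ∀ c ∈ C, (Real.log C.card - Real.log (cnt C (A ∪ B) c))
      + (Real.log C.card - Real.log (cnt C (A ∩ B) c))
      ≤ (Real.log C.card - Real.log (cnt C A c)) + (Real.log C.card - Real.log (cnt C B c))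
        + (((cnt C A c : ℝ) * cnt C B c) / (cnt C (A ∪ B) c * cnt C (A ∩ B) c) - 1) := by
    intro c hc
    have p1 : (0 : ℝ) < cnt C A c := by exact_mod_cast cnt_pos C _ c hc
    have p2 : (0 : ℝ) < cnt C B c := by exact_mod_cast cnt_pos C _ c hc
    have p3 : (0 : ℝ) < cnt C (A ∪ B) c := by exact_mod_cast cnt_pos C _ c hc
    have p4 : (0 : ℝ) < cnt C (A ∩ B) c := by exact_mod_cast cnt_pos C _ c hc
    have := Real.log_le_sub_one_of_pos
      (show 0 < ((cnt C A c : ℝ) * cnt C B c) / (cnt C (A ∪ B) c * cnt C (A ∩ B) c) by positivity)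
    rw [Real.log_div (by positivity) (by positivity), Real.log_mul p1.ne' p2.ne',
      Real.log_mul p3.ne' p4.ne'] at this
    linarith
  have hs := Finset.sum_le_sum hterm
  simp only [Finset.sum_add_distrib] at hs
  rw [Finset.sum_sub_distrib (s := C) (g := fun _ => (1 : ℝ))] at hs
  simp only [Finset.sum_const, nsmul_eq_mul, mul_one] at hs
  unfold ent
  linarith

theorem ent_single {X : Type} (m : ℕ) (hm : 2 ≤ m) (C : Finset (X → Fin m)) (i : X) :
    ent C {i} ≤ C.card * Real.log m := by
  have hcount : ∑ c ∈ C, (1 / (cnt C {i} c : ℝ)) ≤ m := by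
    rw [← Finset.sum_fiberwise C (fun c => c i)]
    calc _ ≤ ∑ v : Fin m, (1 : ℝ) := ?_
      _ = m := by simp
    apply Finset.sum_le_sum
    intro v _
    apply class_sum
    rintro c _ d _ hc hd x hx
    rw [Set.mem_singleton_iff.1 hx, hc, hd]
  have mpos : (0 : ℝ) < m := by exact_mod_cast (by omega : 0 < m)
  have hterm : ∀ c ∈ C, Real.log C.card - Real.log (cnt C {i} c)
      ≤ Real.log m + ((C.card / m : ℝ) * (1 / (cnt C {i} c : ℝ)) - 1) := by
    intro c hc
    have p1 : (0 : ℝ) < cnt C {i} c := by exact_mod_cast cnt_pos C _ c hc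
    have p2 : (0 : ℝ) < C.card := by exact_mod_cast Finset.card_pos.2 ⟨c, hc⟩
    have := Real.log_le_sub_one_of_pos
      (show 0 < (C.card / m : ℝ) * (1 / (cnt C {i} c : ℝ)) by positivity)
    rw [Real.log_mul (by positivity) (by positivity), Real.log_div p2.ne' mpos.ne', one_div,
      Real.log_inv] at this
    rw [one_div]
    linarith
  have hs := Finset.sum_le_sum hterm
  rw [Finset.sum_add_distrib, Finset.sum_sub_distrib (g := fun _ => (1 : ℝ)),
    ← Finset.mul_sum] at hs
  simp only [Finset.sum_const (s := C), nsmul_eq_mul, mul_one] at hs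
  have : (C.card / m : ℝ) * ∑ c ∈ C, (1 / (cnt C {i} c : ℝ)) ≤ (C.card / m : ℝ) * m :=
    mul_le_mul_of_nonneg_left hcount (by positivity)
  rw [div_mul_cancel₀ _ mpos.ne'] at this
  unfold ent
  linarith

theorem ent_span {X K : Type} (S : SpanoidOn X) (C : Finset (X → K))
    (hC : sConsistent S (C : Set (X → K))) (A B : Set X) (hB : B ⊆ sSpan S A) :
    ent C B ≤ ent C A := by
  have key : ∀ c ∈ C, ∀ d ∈ C, Set.EqOn d c A → Set.EqOn d c B := by
    intro c hc d hd h x hx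
    refine span_min S A {x | d x = c x} h ?_ (hB hx)
    intro p hp hsub
    obtain ⟨g, hg⟩ := hC p hp
    change d p.2 = c p.2
    rw [hg c hc, hg d hd]
    congr 1
    funext a
    exact hsub a.2
  unfold ent
  apply Finset.sum_le_sum
  intro c hc
  apply sub_le_sub_left
  apply Real.log_le_log
  · exact_mod_cast cnt_pos C A c hc
  · norm_cast
    apply Finset.card_le_card
    intro d hd
    have hd := Finset.mem_filter.1 hd
    exact Finset.mem_filter.2 ⟨hd.1, key c hc d hd.1 hd.2⟩

theorem code_bound {X : Type} (S : SpanoidOn X) (k : ℕ) (hS : Good k S) (m : ℕ) (hm : 2 ≤ m)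
    (C : Finset (X → Fin m)) (hC : sConsistent S (C : Set (X → Fin m))) :
    Real.log C.card ≤ (5 / 2 : ℝ) ^ k * Real.log m := by
  have lm : 0 ≤ Real.log m := Real.log_natCast_nonneg m
  rcases C.eq_empty_or_nonempty with rfl | hne
  · simp; positivity
  · have hpos : (0 : ℝ) < C.card := by exact_mod_cast Finset.card_pos.2 hne
    have := hS.bound (ent C) (C.card * Real.log m)
      ⟨by simp [ent, cnt], ent_single m hm C, ent_submod C, ent_span S C hC⟩
    have hu : ent C Set.univ = C.card * Real.log C.card := by
      have : ∀ c ∈ C, Real.log C.card - Real.log (cnt C Set.univ c) = Real.log C.card := by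
        intro c hc
        have : cnt C Set.univ c = 1 := by
          unfold cnt
          rw [Finset.card_eq_one]
          refine ⟨c, ?_⟩
          ext d
          simp only [Finset.mem_filter, Set.eqOn_univ, Finset.mem_singleton]
          constructor
          · exact fun h => h.2
          · rintro rfl; exact ⟨hc, rfl⟩
        rw [this]; simp
      unfold ent
      rw [Finset.sum_congr rfl this]; simp
    rw [hu] at this
    refine le_of_mul_le_mul_left ?_ hpos
    linarith

end entropy

theorem frank_le {X : Type} [Finite X] (S : SpanoidOn X) (k : ℕ) (hS : Good k S) :
    sFrank S ≤ (5 / 2 : ℝ) ^ k := by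
  apply Real.sSup_le _ (by positivity)
  rintro d ⟨m, hm, C, hC, rfl⟩
  have lm : 0 < Real.log m := Real.log_pos (by exact_mod_cast (by omega : 1 < m))
  rw [div_le_iff₀ lm]
  have hfin : C.Finite := C.toFinite
  have := code_bound S k hS m hm hfin.toFinset (by simpa using hC)
  rwa [← Set.ncard_eq_toFinset_card C hfin, ← Nat.card_coe_set_eq] at this

theorem rank_eq {X : Type} [Fintype X] (S : SpanoidOn X) (k : ℕ) (hS : Good k S) :
    sRank S = 3 ^ k := by
  apply le_antisymm
  · exact Nat.sInf_le hS.attained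
  · have hne : {k : ℕ | ∃ T : Set X, T.ncard = k ∧ sSpan S T = Set.univ}.Nonempty :=
      ⟨3 ^ k, hS.attained⟩
    obtain ⟨T, h1, hT⟩ := Nat.sInf_mem hne
    unfold sRank
    rw [← h1]
    exact hS.lower T hT

theorem logb_eq : Real.logb 5 3 - Real.logb 5 (5 / 2) = Real.logb 5 (6 / 5) := by
  rw [← Real.logb_div (by norm_num) (by norm_num)]
  norm_num

set_option exponentiation.threshold 2000 in
theorem numeric : (0.113 : ℝ) ≤ Real.logb 5 (6 / 5) := by
  have h : (113 : ℝ) * Real.log 5 ≤ 1000 * Real.log (6 / 5) := by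
    have := Real.log_le_log (x := (5 : ℝ) ^ 113) (y := (6 / 5 : ℝ) ^ 1000) (by positivity)
      (by norm_num)
    rw [Real.log_pow, Real.log_pow] at this
    exact_mod_cast this
  rw [Real.logb, le_div_iff₀ (Real.log_pos (by norm_num))]
  linarith

end Gap

/-- for every `k ≥ 1` there is a spanoid on `n = 5^k` elements with rank `3^k`
and functional rank at most `(5/2)^k`; consequently `rank(S) ≥ n^c · f-rank(S)` with
`c = log₅ 3 − log₅ (5/2) ≥ 0.113`. -/
theorem frank_rank_polynomial_gap :
    ∀ k : ℕ, 1 ≤ k → ∃ S : SpanoidOn (Fin (5 ^ k)),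
      sRank S = 3 ^ k ∧ sFrank S ≤ (5 / 2 : ℝ) ^ k ∧
      (0.113 : ℝ) ≤ Real.logb 5 3 - Real.logb 5 (5 / 2) ∧
      ((5 ^ k : ℕ) : ℝ) ^ (Real.logb 5 3 - Real.logb 5 (5 / 2)) * sFrank S
        ≤ (sRank S : ℝ) := by
  intro k _
  obtain ⟨S, hS⟩ := Gap.exists_good k
  have hf := Gap.frank_le S k hS
  refine ⟨S, Gap.rank_eq S k hS, hf, ?_, ?_⟩
  · rw [Gap.logb_eq]; exact Gap.numeric
  · rw [Gap.logb_eq, Gap.rank_eq S k hS]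
    have e : ((5 ^ k : ℕ) : ℝ) ^ (Real.logb 5 (6 / 5)) = (6 / 5 : ℝ) ^ k := by
      push_cast
      rw [← Real.rpow_natCast, ← Real.rpow_mul (by norm_num), mul_comm,
        Real.rpow_mul (by norm_num), Real.rpow_logb (by norm_num) (by norm_num) (by norm_num),
        Real.rpow_natCast]
    rw [e]
    calc (6 / 5 : ℝ) ^ k * sFrank S ≤ (6 / 5 : ℝ) ^ k * (5 / 2 : ℝ) ^ k :=
          mul_le_mul_of_nonneg_left hf (by positivity)
      _ = ((3 ^ k : ℕ) : ℝ) := by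
          rw [← mul_pow]; push_cast; norm_num
end
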